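/- arXiv:2503.11222 — 2 statements merged into one kernel-verified Lean document; each statement's English description precedes it below -/
import Mathlib

section
/- Let G=(V,w,μ,d) be a finite connected weighted graph with a general path distance satisfying Σ_{y∼x} w(x,y)=μ(x) for all x∈V. Then the following are equivalent: (i) G is Ollivier-Betti sharp and bone-idle; (ii) G is Ollivier-Betti sharp and κ₁(x,y)≥0 for every edge x∼y; (iii) there exist an abelian group structure · on V and generators a_1,…,a_m making G a weighted flat torus, the vertex measure μ is constant, and d(x,a_i·x)=d(x',a_i·x') for all x,x'∈V and all i∈{1,…,m}. -/
/-!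
A form `α ∈ H₁(M₂(G))` behaves like a gradient near every edge: the cycles in `X₂` are chosen so that
the `α`-sum along a walk with at most three edges equals the `α`-sum along some geodesic with the
same endpoints (`geoSum_two`, `geoSum_three`). So if `α ≤ d` on edges and `α(x,y) = d(x,y)`, then
`(u,v) ↦ α(u,x) + α(x,y) + α(y,v)` is a Kantorovich potential for the random walk measures at `x` and
`y`, and harmonicity makes its integral equal to `d(x,y)`. This gives
`W(m_x^ε, m_y^ε) ≥ d(x,y)` (`le_cost`), and any coupling of cost at most `d(x,y)`, as provided by
`κ₁ ≥ 0`, only moves mass along pairs on which the potential is tight (`plan_tight`).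

From tightness one gets a maximum principle: tight edges propagate through the whole graph
(`tight_everywhere`). Hence the convex hull of the slopes `α(x,y)/d(x,y)`, `y ∼ x`, viewed as vectors
in the dual of `H₁`, is the same at all vertices `x`. It is symmetric and spans, so it has at least
`2β₁` extreme points; if `deg ≤ 2β₁`, the slopes are exactly the vertices of a cross-polytope
(`cross_polytope`). They label the edges by permutations `T i` and their inverses, and there are
harmonic forms with arbitrarily prescribed slope in each direction (`exists_coords`).

Varying the slopes in the tightness identity determines the optimal couplings along an edge of
direction `i`: they match edges of each other direction `j` with edges of direction `j` of equal
length (`Coords.pairing`). Consequently the `T i` commute, and transition probabilities and lengths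
are invariant under transverse translation. Along its own direction the transition probability is
monotone, hence constant on a finite orbit; the symmetry of `w` then makes `μ` constant, and
the vanishing divergence of the coordinate forms makes the lengths constant (`Coords.mu_const`,
`Coords.d_const`). The commuting permutations generate a simply transitive abelian group, whose
structure is transported to `V` (`exists_commGroup`, `exists_flatTorus`).

Conversely, on a flat torus with constant `μ` and parallel edges of equal length, translations
preserve `w` and provide couplings of `m_x^ε` and `m_y^ε` of cost `d(x,y)`; these yield `κ₁ ≥ 0` and
hence non-negative curvature. The generators give `deg ≤ 2β₁`, so the coordinates above
exist; they show `deg = 2β₁`, and their forms show by `le_cost` that the translations are optimal, that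
is, `κ_ε = 0` (`sharp_of_torus`).
-/

open Finset

namespace Paper

variable {V : Type*}

/-- Adjacency relation of a weighted graph: `x ∼ y` iff `w x y > 0`. -/
def Adj (w : V → V → ℝ) (x y : V) : Prop := 0 < w x y

/-- The axioms of a weighted graph `(V, w, μ)`: `w` symmetric, nonnegative, vanishing on the
diagonal, and `μ` positive. -/
structure IsWeightedGraph (w : V → V → ℝ) (μ : V → ℝ) : Prop where
  symm : ∀ x y, w x y = w y x
  nonneg : ∀ x y, 0 ≤ w x y
  loopless : ∀ x, w x x = 0
  mu_pos : ∀ x, 0 < μ x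

/-- Connectedness of the weighted graph. -/
def GraphConnected (w : V → V → ℝ) : Prop :=
  ∀ x y : V, ∃ (n : ℕ) (c : Fin (n + 1) → V), c 0 = x ∧ c (Fin.last n) = y ∧
    ∀ i : Fin n, Adj w (c i.castSucc) (c i.succ)

/-- `d` is a general path distance for the graph with edge weight `w`:
symmetric, vanishing exactly on the diagonal, nonnegative, and equal to the infimum of the
lengths of paths joining the two points. -/
def IsPathDistance (w : V → V → ℝ) (d : V → V → ℝ) : Prop :=
  (∀ x y, d x y = d y x) ∧ (∀ x y, d x y = 0 ↔ x = y) ∧ (∀ x y, 0 ≤ d x y) ∧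
  ∀ x y : V, IsGLB { s : ℝ |
      ∃ (n : ℕ) (c : Fin (n + 1) → V), c 0 = x ∧ c (Fin.last n) = y ∧
        (∀ i : Fin n, Adj w (c i.castSucc) (c i.succ)) ∧
        s = ∑ i : Fin n, d (c i.castSucc) (c i.succ) } (d x y)

section Finite

variable [Fintype V]

/-- The (negative) graph Laplacian `Δ f (x) = ∑_y (w x y / μ x) (f y - f x)`. -/
noncomputable def lap (w : V → V → ℝ) (μ : V → ℝ) (f : V → ℝ) (x : V) : ℝ :=
  ∑ y, w x y / μ x * (f y - f x)

/-- The gradient `∇_{xy} f = (f x - f y)/d(x,y)`. -/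
noncomputable def grad (d : V → V → ℝ) (f : V → ℝ) (x y : V) : ℝ := (f x - f y) / d x y

/-- The Lipschitz norm `‖∇ f‖_∞ = sup_{x ∼ y} |∇_{xy} f|`. -/
noncomputable def gradNorm (w d : V → V → ℝ) (f : V → ℝ) : ℝ :=
  sSup { r : ℝ | ∃ x y, Adj w x y ∧ r = |grad d f x y| }

/-- The Ollivier curvature `κ(x,y) = inf {∇_{xy} Δ f : ∇_{yx} f = 1, ‖∇ f‖_∞ = 1}`. -/
noncomputable def kappa (w : V → V → ℝ) (μ : V → ℝ) (d : V → V → ℝ) (x y : V) : ℝ :=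
  sInf { r : ℝ | ∃ f : V → ℝ, grad d f y x = 1 ∧ gradNorm w d f = 1 ∧
      r = grad d (lap w μ f) x y }

/-- Non-negative Ollivier curvature on every edge. -/
def NonnegCurv (w : V → V → ℝ) (μ : V → ℝ) (d : V → V → ℝ) : Prop :=
  ∀ x y, Adj w x y → 0 ≤ kappa w μ d x y

/-- A cycle of length `n + 3`: an injective cyclic path along edges. -/
def IsCycle {n : ℕ} (w : V → V → ℝ) (c : ZMod (n + 3) → V) : Prop :=
  Function.Injective c ∧ ∀ i, Adj w (c i) (c (i + 1))

/-- Membership of a cycle in `X₂`: either a triangle, or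
`d(x₀,x₃) < d(x₀,x₁)+d(x₁,x₂)+d(x₂,x₃)` and `x₃ ∼ … ∼ x_{n-1} ∼ x₀` is a geodesic. -/
def InX2 {n : ℕ} (w d : V → V → ℝ) (c : ZMod (n + 3) → V) : Prop :=
  n = 0 ∨
    (d (c 0) (c 3) < d (c 0) (c 1) + d (c 1) (c 2) + d (c 2) (c 3) ∧
      ∑ i ∈ Finset.univ.filter (fun i : ZMod (n + 3) => i ≠ 0 ∧ i ≠ 1 ∧ i ≠ 2),
          d (c i) (c (i + 1)) = d (c 3) (c 0))

/-- The set of harmonic 1-forms `H₁(M₂(G))`: antisymmetric functions supported on edges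
with vanishing cyclic sum along every cycle of `X₂` and vanishing divergence `δ* α`. -/
def H1set (w : V → V → ℝ) (μ : V → ℝ) (d : V → V → ℝ) : Set (V → V → ℝ) :=
  { α | (∀ x y, α x y = -α y x) ∧ (∀ x y, ¬Adj w x y → α x y = 0) ∧
      (∀ (n : ℕ) (c : ZMod (n + 3) → V), IsCycle w c → InX2 w d c →
          ∑ i, α (c i) (c (i + 1)) = 0) ∧
      (∀ x, ∑ y, w x y / μ x * α x y = 0) }

/-- The first Betti number `β₁(M₂(G)) = dim H₁(M₂(G))`. -/
noncomputable def betti1 (w : V → V → ℝ) (μ : V → ℝ) (d : V → V → ℝ) : ℕ :=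
  Module.finrank ℝ (Submodule.span ℝ (H1set w μ d))

/-- The combinatorial vertex degree. -/
noncomputable def deg (w : V → V → ℝ) (x : V) : ℕ := Nat.card { y : V // Adj w x y }

/-- The minimal combinatorial vertex degree. -/
noncomputable def degMin (w : V → V → ℝ) : ℕ := ⨅ x : V, deg w x

/-- The maximal combinatorial vertex degree. -/
noncomputable def degMax (w : V → V → ℝ) : ℕ := ⨆ x : V, deg w x

end Finite

end Paper

namespace Paper

/-- `((V,·), (a_1,…,a_m), w, μ, d)` is a weighted flat torus: `(V,·)` is an abelian group
generated by `a_1,…,a_m` with `a_i ≠ a_j^ε` for `i ≠ j`, `d` is a general path distance, and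
the torus conditions (i)–(v) hold. -/
def IsFlatTorus {V : Type*} [Fintype V] [CommGroup V] {m : ℕ} (a : Fin m → V)
    (w : V → V → ℝ) (μ : V → ℝ) (d : V → V → ℝ) : Prop :=
  Subgroup.closure (Set.range a) = ⊤ ∧
  (∀ i j : Fin m, i ≠ j → a i ≠ a j ∧ a i ≠ (a j)⁻¹) ∧
  IsPathDistance w d ∧
  -- (i) the neighbours of `x` are exactly the `a_i^{±1} · x`
  (∀ x y : V, Adj w x y ↔ ∃ i, y = a i * x ∨ y = (a i)⁻¹ * x) ∧
  -- (ii)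
  (∀ (x : V) (i : Fin m),
      w x (a i * x) * d x (a i * x) = w x ((a i)⁻¹ * x) * d x ((a i)⁻¹ * x)) ∧
  -- (iii) with `p(x,y) = w(x,y)/μ(x)`
  (∀ (x : V) (i j : Fin m) (ε₁ ε₂ : ℤ), i ≠ j →
      (ε₁ = 1 ∨ ε₁ = -1) → (ε₂ = 1 ∨ ε₂ = -1) →
      w x (a i ^ ε₁ * x) / μ x
        = w (a j ^ ε₂ * x) (a i ^ ε₁ * (a j ^ ε₂ * x)) / μ (a j ^ ε₂ * x)) ∧
  -- (iv)
  (∀ (x : V) (i j : Fin m), i ≠ j → d x (a i * x) = d (a j * x) (a i * (a j * x))) ∧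
  -- (v)
  betti1 w μ d = m

end Paper

namespace Paper

variable {V : Type*} [Fintype V]

/-- The Wasserstein distance of two (finitely supported) probability measures, via couplings. -/
noncomputable def Wasserstein (d : V → V → ℝ) (ν₁ ν₂ : V → ℝ) : ℝ :=
  sInf { s : ℝ | ∃ ρ : V → V → ℝ, (∀ x y, 0 ≤ ρ x y ∧ ρ x y ≤ 1) ∧
      (∀ x, ∑ y, ρ x y = ν₁ x) ∧ (∀ y, ∑ x, ρ x y = ν₂ y) ∧
      s = ∑ x, ∑ y, ρ x y * d x y }

/-- The lazy random walk measure `m_x^ε`: mass `1 - ε` at `x` and `ε p(x,y)` elsewhere. -/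
noncomputable def idleMeasure [DecidableEq V] (w : V → V → ℝ) (μ : V → ℝ) (ε : ℝ) (x : V) :
    V → ℝ :=
  fun y => if y = x then 1 - ε else ε * (w x y / μ x)

/-- The idleness-`ε` Ollivier curvature `κ_ε(x,y) = 1 − W(m_x^ε, m_y^ε)/d(x,y)`. -/
noncomputable def kappaIdle [DecidableEq V] (w : V → V → ℝ) (μ : V → ℝ) (d : V → V → ℝ)
    (ε : ℝ) (x y : V) : ℝ :=
  1 - Wasserstein d (idleMeasure w μ ε x) (idleMeasure w μ ε y) / d x y

/-- `G` is bone-idle: the graph is stochastically normalized and `κ_ε(x,y) = 0` for every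
`ε ∈ [0,1]` and every edge. -/
def BoneIdle [DecidableEq V] (w : V → V → ℝ) (μ : V → ℝ) (d : V → V → ℝ) : Prop :=
  (∀ x, ∑ y, w x y = μ x) ∧
  ∀ ε : ℝ, 0 ≤ ε → ε ≤ 1 → ∀ x y, Adj w x y → kappaIdle w μ d ε x y = 0

/-- All edges of `G` parallel to a generator have the same length. -/
def ParallelEdgesSameLength [CommGroup V] {m : ℕ} (a : Fin m → V) (d : V → V → ℝ) : Prop :=
  ∀ (i : Fin m) (x x' : V), d x (a i * x) = d x' (a i * x')

end Paper

/-! ### Geodesics and the cycle condition -/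

namespace Paper

section Distance

variable {V : Type*} [Fintype V] {w d : V → V → ℝ} {μ : V → ℝ}

/-- The standing assumptions: a finite connected weighted graph with a general path distance and
stochastic normalization. -/
structure Standing (w : V → V → ℝ) (μ : V → ℝ) (d : V → V → ℝ) : Prop where
  graph : IsWeightedGraph w μ
  conn : GraphConnected w
  dist : IsPathDistance w d
  stoch : ∀ x, ∑ y, w x y = μ x

lemma Standing.adj_symm (h : Standing w μ d) {x y : V} (hxy : Adj w x y) : Adj w y x := by
  unfold Adj at *
  rwa [h.graph.symm]

lemma Standing.adj_ne (h : Standing w μ d) {x y : V} (hxy : Adj w x y) : x ≠ y := by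
  rintro rfl
  exact absurd (h.graph.loopless x) (ne_of_gt hxy)

lemma Standing.d_symm (h : Standing w μ d) (x y : V) : d x y = d y x := h.dist.1 x y

lemma Standing.d_self (h : Standing w μ d) (x : V) : d x x = 0 := (h.dist.2.1 x x).2 rfl

lemma Standing.d_nonneg (h : Standing w μ d) (x y : V) : 0 ≤ d x y := h.dist.2.2.1 x y

lemma Standing.d_pos (h : Standing w μ d) {x y : V} (hxy : x ≠ y) : 0 < d x y :=
  lt_of_le_of_ne (h.d_nonneg x y) fun h0 => hxy ((h.dist.2.1 x y).1 h0.symm)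

lemma Standing.triangle_adj (h : Standing w μ d) {x y : V} (z : V) (hxy : Adj w x y) :
    d x z ≤ d x y + d y z := by
  have : d x z - d x y ≤ d y z := by
    refine (h.dist.2.2.2 y z).2 ?_
    rintro s ⟨n, c, h0, hl, hc, rfl⟩
    rw [sub_le_iff_le_add']
    refine (h.dist.2.2.2 x z).1 ⟨n + 1, Fin.cons x c, by simp, ?_, ?_, ?_⟩
    · rw [← Fin.succ_last, Fin.cons_succ, hl]
    · intro i
      refine Fin.cases ?_ (fun i => ?_) i
      · simpa [h0] using hxy
      · simpa [← Fin.succ_castSucc] using hc i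
    · rw [Fin.sum_univ_succ]
      simp [h0]
  linarith

lemma Standing.le_path (h : Standing w μ d) (z : V) :
    ∀ (n : ℕ) (c : Fin (n + 1) → V), (∀ i : Fin n, Adj w (c i.castSucc) (c i.succ)) →
      d (c 0) z ≤ ∑ i : Fin n, d (c i.castSucc) (c i.succ) + d (c (Fin.last n)) z := by
  intro n
  induction n with
  | zero => intro c _; simp
  | succ n ih =>
    intro c hc
    have h1 := ih (fun i => c i.succ) (fun i => by simpa [← Fin.succ_castSucc] using hc i.succ)
    have h2 := h.triangle_adj z (hc 0)
    rw [Fin.sum_univ_succ]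
    simp only [Fin.castSucc_zero, Fin.succ_zero_eq_one, Fin.succ_last,
      ← Fin.succ_castSucc] at h1 h2 ⊢
    linarith

lemma Standing.triangle (h : Standing w μ d) (x y z : V) : d x z ≤ d x y + d y z := by
  have : d x z - d y z ≤ d x y := by
    refine (h.dist.2.2.2 x y).2 ?_
    rintro s ⟨n, c, h0, hl, hc, rfl⟩
    have := h.le_path z n c hc
    rw [h0, hl] at this
    linarith
  linarith

lemma Standing.exists_adj (h : Standing w μ d) (x : V) : ∃ y, Adj w x y := by
  by_contra hno
  push Not at hno
  have : ∑ y, w x y = 0 := Finset.sum_eq_zero fun y _ =>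
    le_antisymm (not_lt.1 (hno y)) (h.graph.nonneg x y)
  have h2 := h.graph.mu_pos x
  rw [← h.stoch x, this] at h2
  exact lt_irrefl _ h2

/-- Since the graph is finite, the infimum over paths is attained step by step: some neighbour of
`x` lies between `x` and `y`. -/
lemma Standing.exists_step (h : Standing w μ d) {x y : V} (hxy : x ≠ y) :
    ∃ z, Adj w x z ∧ d x y = d x z + d z y := by
  classical
  obtain ⟨y0, hy0⟩ := h.exists_adj x
  obtain ⟨z, hz, hmin⟩ := Finset.exists_min_image
    (Finset.univ.filter fun z => Adj w x z) (fun z => d x z + d z y)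
    ⟨y0, by simpa using hy0⟩
  simp only [Finset.mem_filter, Finset.mem_univ, true_and] at hz hmin
  refine ⟨z, hz, le_antisymm (h.triangle x z y) ?_⟩
  refine (h.dist.2.2.2 x y).2 ?_
  rintro s ⟨n, c, h0, hl, hc, rfl⟩
  cases n with
  | zero => exact absurd (h0.symm.trans hl) hxy
  | succ n =>
    have h1 := h.le_path y n (fun i => c i.succ)
      (fun i => by simpa [← Fin.succ_castSucc] using hc i.succ)
    have h2 := hc 0
    rw [Fin.sum_univ_succ]
    simp only [Fin.castSucc_zero, Fin.succ_zero_eq_one, Fin.succ_last,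
      ← Fin.succ_castSucc, h0, hl, h.d_self] at h1 h2 ⊢
    have := hmin _ h2
    linarith

/-- A geodesic from `x` to `y`, given as a sequence along which the distance to `y` drops by the
length of each edge. -/
def IsGeo (w d : V → V → ℝ) (x y : V) (k : ℕ) (P : ℕ → V) : Prop :=
  P 0 = x ∧ P k = y ∧ ∀ i < k, Adj w (P i) (P (i + 1)) ∧
    d (P i) y = d (P i) (P (i + 1)) + d (P (i + 1)) y

lemma Standing.exists_geo (h : Standing w μ d) (x y : V) : ∃ k P, IsGeo w d x y k P := by
  have wf : WellFounded (fun a b : V => d a y < d b y) := by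
    have : IsTrans V (fun a b : V => d a y < d b y) := ⟨fun _ _ _ => lt_trans⟩
    have : Std.Irrefl (fun a b : V => d a y < d b y) := ⟨fun _ => lt_irrefl _⟩
    exact Finite.wellFounded_of_trans_of_irrefl _
  induction x using wf.induction with
  | _ x ih =>
  by_cases hxy : x = y
  · exact ⟨0, fun _ => x, rfl, hxy, by simp⟩
  obtain ⟨z, hz, hdz⟩ := h.exists_step hxy
  have := h.d_pos (h.adj_ne hz)
  obtain ⟨k, P, h0, hk, hP⟩ := ih z (by linarith)
  refine ⟨k + 1, fun i => Nat.casesOn i x P, rfl, hk, ?_⟩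
  intro i hi
  cases i with
  | zero => simpa [h0] using ⟨hz, hdz⟩
  | succ i => exact hP i (by omega)

lemma IsGeo.lt (h : Standing w μ d) {x y : V} {k : ℕ} {P : ℕ → V} (hP : IsGeo w d x y k P)
    {i j : ℕ} (hij : i < j) (hj : j ≤ k) : d (P j) y < d (P i) y := by
  induction j, hij using Nat.le_induction with
  | base =>
    have := hP.2.2 i (by omega)
    have h2 := h.d_pos (h.adj_ne this.1)
    linarith [this.2]
  | succ j hij ih =>
    have := hP.2.2 j (by omega)
    have h2 := h.d_pos (h.adj_ne this.1)
    have := ih (by omega)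
    linarith

lemma IsGeo.ne (h : Standing w μ d) {x y : V} {k : ℕ} {P : ℕ → V} (hP : IsGeo w d x y k P)
    {i j : ℕ} (hij : i < j) (hj : j ≤ k) : P i ≠ P j := by
  intro he
  have := hP.lt h hij hj
  rw [he] at this
  exact lt_irrefl _ this

lemma IsGeo.split (h : Standing w μ d) {x y : V} {k : ℕ} {P : ℕ → V} (hP : IsGeo w d x y k P)
    {j : ℕ} (hj : j ≤ k) : d x y = d x (P j) + d (P j) y := by
  refine le_antisymm (h.triangle _ _ _) ?_
  induction j with
  | zero => simp [hP.1, h.d_self]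
  | succ j ih =>
    have h1 := ih (by omega)
    have h2 := (hP.2.2 j (by omega)).2
    have h3 := h.triangle x (P j) (P (j + 1))
    linarith

/-- `GeoSum w d α x y s`: some geodesic from `x` to `y` has `α`-sum equal to `s`. -/
inductive GeoSum (w d α : V → V → ℝ) : V → V → ℝ → Prop
  | nil (x : V) : GeoSum w d α x x 0
  | cons {x z y : V} {s : ℝ} : Adj w x z → d x y = d x z + d z y → GeoSum w d α z y s →
      GeoSum w d α x y (α x z + s)

variable {α : V → V → ℝ}

lemma GeoSum.edge (h : Standing w μ d) {x y : V} (hxy : Adj w x y) :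
    GeoSum w d α x y (α x y) := by
  have := GeoSum.cons (α := α) hxy (by rw [h.d_self, add_zero]) (GeoSum.nil (d := d) y)
  rwa [add_zero] at this

lemma GeoSum.append (h : Standing w μ d) {x y z : V} {s t : ℝ} (h1 : GeoSum w d α x y s)
    (h2 : GeoSum w d α y z t) (hd : d x z = d x y + d y z) : GeoSum w d α x z (s + t) := by
  induction h1 with
  | nil x => simpa using h2
  | @cons x u y s hxu hdu _ ih =>
    have h3 := h.triangle x u z
    have h4 := h.triangle u y z
    rw [add_assoc]
    exact GeoSum.cons hxu (by linarith) (ih h2 (by linarith))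

lemma GeoSum.le (h : Standing w μ d) (hα : ∀ u v, Adj w u v → α u v ≤ d u v) {x y : V} {s : ℝ}
    (hs : GeoSum w d α x y s) : s ≤ d x y := by
  induction hs with
  | nil x => rw [h.d_self]
  | cons hxz hd _ ih => rw [hd]; exact add_le_add (hα _ _ hxz) ih

/-- If a geodesic has maximal `α`-sum, then its first edge is already tight. -/
lemma GeoSum.tight (h : Standing w μ d) (hα : ∀ u v, Adj w u v → α u v ≤ d u v) {x y : V} {s : ℝ}
    (hs : GeoSum w d α x y s) (hsd : s = d x y) (hxy : x ≠ y) :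
    ∃ z, Adj w x z ∧ α x z = d x z ∧ d x y = d x z + d z y := by
  cases hs with
  | nil => exact absurd rfl hxy
  | @cons _ z _ s hxz hd hs =>
    have h1 := hα _ _ hxz
    have h2 := hs.le h hα
    exact ⟨z, hxz, by linarith, hd⟩

omit [Fintype V] in
lemma GeoSum.of_geo {k : ℕ} : ∀ {x y : V} {P : ℕ → V}, IsGeo w d x y k P →
    GeoSum w d α x y (∑ i ∈ Finset.range k, α (P i) (P (i + 1))) := by
  induction k with
  | zero =>
    rintro x y P ⟨h0, hk, -⟩
    rw [← hk, ← h0]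
    exact GeoSum.nil _
  | succ k ih =>
    rintro x y P ⟨h0, hk, hP⟩
    have h1 : IsGeo w d (P 1) y k (fun i => P (i + 1)) :=
      ⟨rfl, hk, fun i hi => hP (i + 1) (by omega)⟩
    have h2 := hP 0 (by omega)
    rw [Finset.sum_range_succ', add_comm, ← h0]
    exact GeoSum.cons h2.1 h2.2 (ih h1)

end Distance

section Cycles

variable {V : Type*} [Fintype V] {w d α : V → V → ℝ} {μ : V → ℝ}

/-- The cycle condition of `H1set`, for a cycle presented as a sequence `q 0, …, q (n + 3) = q 0`. -/
lemma cycle_sum (hα : α ∈ H1set w μ d) {n : ℕ} (q : ℕ → V) (hN : q (n + 3) = q 0)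
    (hinj : ∀ i j, i < j → j < n + 3 → q i ≠ q j)
    (hadj : ∀ i < n + 3, Adj w (q i) (q (i + 1)))
    (hX : n = 0 ∨ (d (q 0) (q 3) < d (q 0) (q 1) + d (q 1) (q 2) + d (q 2) (q 3) ∧
      d (q 0) (q 0) = 0 ∧
      ∀ i, 3 ≤ i → i < n + 3 → d (q i) (q 0) = d (q i) (q (i + 1)) + d (q (i + 1)) (q 0))) :
    ∑ i ∈ Finset.range (n + 3), α (q i) (q (i + 1)) = 0 := by
  have hval : ∀ i : ZMod (n + 3), q (i + 1).val = q (i.val + 1) := by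
    intro i
    have hi := ZMod.val_lt i
    by_cases h1 : i.val + 1 < n + 3
    · congr 1
      have : i + 1 = ((i.val + 1 : ℕ) : ZMod (n + 3)) := by
        rw [Nat.cast_add, Nat.cast_one, ZMod.natCast_zmod_val]
      rw [this, ZMod.val_natCast_of_lt h1]
    · have h2 : i.val + 1 = n + 3 := by omega
      have : i + 1 = 0 := by
        rw [← ZMod.natCast_zmod_val i, ← Nat.cast_one, ← Nat.cast_add, h2]
        simp
      rw [this, h2, hN]; simp
  have hsum : ∀ F : ℕ → ℝ, ∑ i : ZMod (n + 3), F i.val = ∑ i ∈ Finset.range (n + 3), F i :=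
    fun F => Fin.sum_univ_eq_sum_range F (n + 3)
  have hv0 : (0 : ZMod (n + 3)).val = 0 := ZMod.val_zero
  have hv1 : (1 : ZMod (n + 3)).val = 1 := by
    have := ZMod.val_natCast_of_lt (n := n + 3) (a := 1) (by omega)
    simpa using this
  have hv2 : (2 : ZMod (n + 3)).val = 2 := by
    have := ZMod.val_natCast_of_lt (n := n + 3) (a := 2) (by omega)
    simpa using this
  have key := hα.2.2.1 n (fun i => q i.val) ⟨?_, ?_⟩ ?_
  · simp only [hval] at key
    rw [← hsum fun i => α (q i) (q (i + 1))]
    exact key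
  · intro i j hij
    have hi := ZMod.val_lt i
    have hj := ZMod.val_lt j
    rcases lt_trichotomy i.val j.val with h | h | h
    · exact absurd hij (hinj _ _ h hj)
    · exact ZMod.val_injective _ h
    · exact absurd hij.symm (hinj _ _ h hi)
  · intro i
    simp only [hval]
    exact hadj _ (ZMod.val_lt i)
  · rcases Nat.eq_zero_or_pos n with h0 | h0
    · exact Or.inl h0
    · rcases hX with h1 | ⟨h1, h00, h2⟩
      · omega
      right
      have hv3 : (3 : ZMod (n + 3)).val = 3 := by
        have := ZMod.val_natCast_of_lt (n := n + 3) (a := 3) (by omega)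
        simpa using this
      simp only [hval, hv0, hv1, hv2, hv3]
      refine ⟨h1, ?_⟩
      have hfilt : ∀ i : ZMod (n + 3), (i ≠ 0 ∧ i ≠ 1 ∧ i ≠ 2) ↔ 3 ≤ i.val := by
        intro i
        rw [← (ZMod.val_injective (n + 3)).ne_iff, ← (ZMod.val_injective (n + 3)).ne_iff,
          ← (ZMod.val_injective (n + 3)).ne_iff, hv0, hv1, hv2]
        omega
      rw [Finset.sum_filter]
      simp only [hfilt]
      rw [hsum fun i => if 3 ≤ i then d (q i) (q (i + 1)) else 0]
      -- the distances to `q 0` telescope along the geodesic part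
      have tel : ∀ m ≤ n, ∑ i ∈ Finset.range (m + 3), (if 3 ≤ i then d (q i) (q (i + 1)) else 0)
          = d (q 3) (q 0) - d (q (m + 3)) (q 0) := by
        intro m
        induction m with
        | zero => intro _; simp [Finset.sum_range_succ]
        | succ m ih =>
          intro hm
          rw [show m + 1 + 3 = (m + 3) + 1 by ring, Finset.sum_range_succ, ih (by omega),
            if_pos (by omega)]
          have := h2 (m + 3) (by omega) (by omega)
          linarith
      rw [tel n le_rfl, hN, h00, sub_zero]

lemma H1.antisymm (hα : α ∈ H1set w μ d) (x y : V) : α x y = -α y x := hα.1 x y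

lemma H1.self (hα : α ∈ H1set w μ d) (x : V) : α x x = 0 := by
  have := hα.1 x x
  linarith

/-- Along a walk with two edges, the `α`-sum is realized by a geodesic with the same endpoints. -/
lemma geoSum_two (h : Standing w μ d) (hα : α ∈ H1set w μ d) {x₀ x₁ x₂ : V}
    (h01 : Adj w x₀ x₁) (h12 : Adj w x₁ x₂) : GeoSum w d α x₀ x₂ (α x₀ x₁ + α x₁ x₂) := by
  by_cases h02 : x₀ = x₂
  · subst h02
    rw [H1.antisymm hα x₁ x₀, add_neg_cancel]
    exact GeoSum.nil _
  rcases (h.triangle x₀ x₁ x₂).eq_or_lt with he | hlt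
  · exact (GeoSum.edge h h01).append h (GeoSum.edge h h12) he
  obtain ⟨k, P, hP⟩ := h.exists_geo x₀ x₂
  have hk : 0 < k := by
    rcases Nat.eq_zero_or_pos k with rfl | hk
    · exact absurd (hP.1.symm.trans hP.2.1) h02
    · exact hk
  obtain ⟨k, rfl⟩ : ∃ n, k = n + 1 := ⟨k - 1, by omega⟩
  have havoid : ∀ j ≤ k + 1, P j ≠ x₁ := by
    intro j hj he
    have := hP.split h hj
    rw [he] at this
    linarith
  have key := cycle_sum (n := k) hα
    (fun i => Nat.casesOn i x₂ fun i => Nat.casesOn i x₁ P) hP.2.1 ?_ ?_ ?_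
  · rw [Finset.sum_range_succ', Finset.sum_range_succ'] at key
    simp only [hP.1] at key
    have h3 := GeoSum.of_geo (α := α) hP
    convert h3 using 1
    change _ + α x₁ x₀ + α x₂ x₁ = 0 at key
    have := H1.antisymm hα x₀ x₁
    have := H1.antisymm hα x₁ x₂
    linarith
  · intro i j hij hj
    match i, j with
    | 0, 0 => omega
    | 0, 1 => exact (h.adj_ne h12).symm
    | 0, j + 2 => exact fun he => hP.ne h (show j < k + 1 by omega) le_rfl (he.symm.trans hP.2.1.symm)
    | 1, 1 => omega
    | 1, j + 2 => exact (havoid j (by omega)).symm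
    | i + 2, j + 2 => exact hP.ne h (by omega) (by omega)
  · intro i hi
    match i with
    | 0 => exact h.adj_symm h12
    | 1 =>
      change Adj w x₁ (P 0)
      rw [hP.1]; exact h.adj_symm h01
    | i + 2 => exact (hP.2.2 i (by omega)).1
  · right
    refine ⟨?_, h.d_self _, ?_⟩
    · change d x₂ (P 1) < d x₂ x₁ + d x₁ (P 0) + d (P 0) (P 1)
      have h1 := (hP.2.2 0 (by omega)).2
      rw [hP.1] at h1 ⊢
      have := h.d_nonneg x₀ (P 1)
      have := h.d_symm x₂ (P 1)
      have := h.d_symm x₂ x₁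
      have := h.d_symm x₀ x₁
      simp only [zero_add] at h1
      linarith
    · intro i hi hi'
      match i with
      | i + 2 => exact (hP.2.2 i (by omega)).2

/-- Along a walk with three edges, the `α`-sum is realized by a geodesic with the same endpoints.
This is where the cycles of `X₂` enter: they are made so that `α` behaves like a gradient near each
edge. -/
lemma geoSum_three (h : Standing w μ d) (hα : α ∈ H1set w μ d) {x₀ x₁ x₂ x₃ : V}
    (h01 : Adj w x₀ x₁) (h12 : Adj w x₁ x₂) (h23 : Adj w x₂ x₃) :
    GeoSum w d α x₀ x₃ (α x₀ x₁ + α x₁ x₂ + α x₂ x₃) := by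
  by_cases h02 : x₀ = x₂
  · subst h02
    rw [H1.antisymm hα x₁ x₀, add_neg_cancel, zero_add]
    exact GeoSum.edge h h23
  by_cases h13 : x₁ = x₃
  · subst h13
    rw [H1.antisymm hα x₂ x₁, add_neg_cancel_right]
    exact GeoSum.edge h h01
  by_cases h2 : d x₀ x₃ = d x₀ x₂ + d x₂ x₃
  · exact (geoSum_two h hα h01 h12).append h (GeoSum.edge h h23) h2
  by_cases h1 : d x₀ x₃ = d x₀ x₁ + d x₁ x₃
  · rw [add_assoc]
    exact (GeoSum.edge h h01).append h (geoSum_two h hα h12 h23) h1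
  have hlt : d x₀ x₃ < d x₀ x₁ + d x₁ x₂ + d x₂ x₃ := by
    have := lt_of_le_of_ne (h.triangle x₀ x₂ x₃) h2
    have := h.triangle x₀ x₁ x₂
    linarith
  obtain ⟨k, P, hP⟩ := h.exists_geo x₀ x₃
  have key := cycle_sum (n := k) hα
    (fun i => Nat.casesOn i x₃ fun i => Nat.casesOn i x₂ fun i => Nat.casesOn i x₁ P)
    hP.2.1 ?_ ?_ ?_
  · rw [Finset.sum_range_succ', Finset.sum_range_succ', Finset.sum_range_succ'] at key
    simp only [hP.1] at key
    have h3 := GeoSum.of_geo (α := α) hP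
    convert h3 using 1
    change _ + α x₁ x₀ + α x₂ x₁ + α x₃ x₂ = 0 at key
    have := H1.antisymm hα x₀ x₁
    have := H1.antisymm hα x₁ x₂
    have := H1.antisymm hα x₂ x₃
    linarith
  · intro i j hij hj
    match i, j with
    | 0, 0 => omega
    | 0, 1 => exact (h.adj_ne h23).symm
    | 0, 2 => exact Ne.symm h13
    | 0, j + 3 => exact fun he => hP.ne h (show j < k by omega) le_rfl (he.symm.trans hP.2.1.symm)
    | 1, 1 => omega
    | 1, 2 => exact (h.adj_ne h12).symm
    | 1, j + 3 =>
      intro he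
      have := hP.split h (show j ≤ k by omega)
      rw [show P j = x₂ from he.symm] at this
      exact h2 this
    | 2, 2 => omega
    | 2, j + 3 =>
      intro he
      have := hP.split h (show j ≤ k by omega)
      rw [show P j = x₁ from he.symm] at this
      exact h1 this
    | i + 3, j + 3 => exact hP.ne h (by omega) (by omega)
  · intro i hi
    match i with
    | 0 => exact h.adj_symm h23
    | 1 => exact h.adj_symm h12
    | 2 =>
      change Adj w x₁ (P 0)
      rw [hP.1]; exact h.adj_symm h01
    | i + 3 => exact (hP.2.2 i (by omega)).1
  · right
    refine ⟨?_, h.d_self _, ?_⟩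
    · change d x₃ (P 0) < d x₃ x₂ + d x₂ x₁ + d x₁ (P 0)
      rw [hP.1, h.d_symm x₃ x₀, h.d_symm x₃ x₂, h.d_symm x₂ x₁, h.d_symm x₁ x₀]
      linarith
    · intro i hi hi'
      match i with
      | i + 3 => exact (hP.2.2 i (by omega)).2

end Cycles
end Paper

/-! ### Transport plans and the maximum principle -/

namespace Paper

section Plans

variable {V : Type*} [Fintype V] {w d α : V → V → ℝ} {μ : V → ℝ}

/-- A coupling of the one-step random walk measures at `x` and `y` of cost at most `d x y`, that
is, a witness for `κ₁(x,y) ≥ 0`. -/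
structure IsPlan (w : V → V → ℝ) (μ : V → ℝ) (d : V → V → ℝ) (x y : V) (ρ : V → V → ℝ) : Prop where
  nonneg : ∀ u v, 0 ≤ ρ u v
  left : ∀ u, ∑ v, ρ u v = w x u / μ x
  right : ∀ v, ∑ u, ρ u v = w y v / μ y
  cost : ∑ u, ∑ v, ρ u v * d u v ≤ d x y

lemma Standing.sum_p (h : Standing w μ d) (x : V) : ∑ y, w x y / μ x = 1 := by
  rw [← Finset.sum_div, h.stoch, div_self (h.graph.mu_pos x).ne']

lemma Standing.p_pos (h : Standing w μ d) {x y : V} : 0 < w x y / μ x ↔ Adj w x y :=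
  div_pos_iff_of_pos_right (h.graph.mu_pos x)

lemma Standing.p_nonneg (h : Standing w μ d) (x y : V) : 0 ≤ w x y / μ x :=
  div_nonneg (h.graph.nonneg x y) (h.graph.mu_pos x).le

lemma IsPlan.exists_right (h : Standing w μ d) {x y u : V} {ρ : V → V → ℝ}
    (hρ : IsPlan w μ d x y ρ) (hu : Adj w x u) : ∃ v, 0 < ρ u v := by
  by_contra hno
  push Not at hno
  have h1 := hρ.left u
  rw [Finset.sum_eq_zero fun v _ => le_antisymm (hno v) (hρ.nonneg u v)] at h1
  exact absurd (h.p_pos.2 hu) (by rw [← h1]; exact lt_irrefl _)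

lemma IsPlan.exists_left (h : Standing w μ d) {x y v : V} {ρ : V → V → ℝ}
    (hρ : IsPlan w μ d x y ρ) (hv : Adj w y v) : ∃ u, 0 < ρ u v := by
  by_contra hno
  push Not at hno
  have h1 := hρ.right v
  rw [Finset.sum_eq_zero fun u _ => le_antisymm (hno u) (hρ.nonneg u v)] at h1
  exact absurd (h.p_pos.2 hv) (by rw [← h1]; exact lt_irrefl _)

lemma IsPlan.adj_left (h : Standing w μ d) {x y u v : V} {ρ : V → V → ℝ}
    (hρ : IsPlan w μ d x y ρ) (huv : 0 < ρ u v) : Adj w x u := by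
  rw [← h.p_pos, ← hρ.left u]
  exact huv.trans_le (Finset.single_le_sum (fun v _ => hρ.nonneg u v) (Finset.mem_univ v))

lemma IsPlan.adj_right (h : Standing w μ d) {x y u v : V} {ρ : V → V → ℝ}
    (hρ : IsPlan w μ d x y ρ) (huv : 0 < ρ u v) : Adj w y v := by
  rw [← h.p_pos, ← hρ.right v]
  exact huv.trans_le
    (Finset.single_le_sum (f := fun u => ρ u v) (fun u _ => hρ.nonneg u v) (Finset.mem_univ u))

/-- Near an edge where `α` is tight, `α` is the gradient of a `1`-Lipschitz function which is
harmonic at both endpoints. Such a function is a Kantorovich potential for every plan, hence the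
plan only transports along pairs on which the potential is tight. -/
lemma plan_tight (h : Standing w μ d) (hα : α ∈ H1set w μ d)
    (hle : ∀ u v, Adj w u v → α u v ≤ d u v) {x y : V} (hxy : Adj w x y) (hmax : α x y = d x y)
    {ρ : V → V → ℝ} (hρ : IsPlan w μ d x y ρ) {u v : V} (huv : 0 < ρ u v) :
    d u v = α u x + d x y + α y v := by
  have hterm : ∀ u v, 0 ≤ ρ u v * (d u v - (α u x + d x y + α y v)) := by
    intro u v
    rcases (hρ.nonneg u v).eq_or_lt with h0 | h0
    · rw [← h0, zero_mul]
    refine mul_nonneg h0.le (sub_nonneg.2 ?_)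
    rw [← hmax]
    exact (geoSum_three h hα (h.adj_symm (hρ.adj_left h h0)) hxy (hρ.adj_right h h0)).le h hle
  have hsum : ∑ u, ∑ v, ρ u v * (d u v - (α u x + d x y + α y v)) ≤ 0 := by
    have e1 : ∑ u, ∑ v, ρ u v * α u x = 0 := by
      simp_rw [← Finset.sum_mul, hρ.left, H1.antisymm hα _ x, mul_neg, Finset.sum_neg_distrib]
      rw [hα.2.2.2 x, neg_zero]
    have e2 : ∑ u, ∑ v, ρ u v * d x y = d x y := by
      simp_rw [← Finset.sum_mul, hρ.left]
      rw [h.sum_p, one_mul]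
    have e3 : ∑ u, ∑ v, ρ u v * α y v = 0 := by
      rw [Finset.sum_comm]
      simp_rw [← Finset.sum_mul, hρ.right]
      exact hα.2.2.2 y
    simp_rw [mul_sub, mul_add, Finset.sum_sub_distrib, Finset.sum_add_distrib]
    rw [e1, e2, e3]
    linarith [hρ.cost]
  have hz : ∑ u, ∑ v, ρ u v * (d u v - (α u x + d x y + α y v)) = 0 :=
    le_antisymm hsum (Finset.sum_nonneg fun u _ => Finset.sum_nonneg fun v _ => hterm u v)
  rw [Finset.sum_eq_zero_iff_of_nonneg
    (fun u _ => Finset.sum_nonneg fun v _ => hterm u v)] at hz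
  have hz2 := hz u (Finset.mem_univ u)
  rw [Finset.sum_eq_zero_iff_of_nonneg (fun v _ => hterm u v)] at hz2
  have := (mul_eq_zero.1 (hz2 v (Finset.mem_univ v))).resolve_left huv.ne'
  linarith

/-- If a plan moves mass from `u` to a different point, the geodesic it moves along starts with a
tight edge. -/
lemma plan_step (h : Standing w μ d) (hα : α ∈ H1set w μ d)
    (hle : ∀ u v, Adj w u v → α u v ≤ d u v) {x y : V} (hxy : Adj w x y) (hmax : α x y = d x y)
    {ρ : V → V → ℝ} (hρ : IsPlan w μ d x y ρ) {u v : V} (huv : 0 < ρ u v) (hne : u ≠ v) :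
    ∃ z, Adj w u z ∧ α u z = d u z ∧ d u v = d u z + d z v := by
  have h1 := plan_tight h hα hle hxy hmax hρ huv
  have h2 := geoSum_three h hα (h.adj_symm (hρ.adj_left h huv)) hxy (hρ.adj_right h huv)
  exact h2.tight h hle (by rw [h1, hmax]) hne

/-- Maximum principle for harmonic `1`-forms: if some edge is tight, then every vertex has a tight
outgoing edge. The tight edges propagate along the transport plans; mass which stays put at a common
neighbour `z` of `x` and `y` is handled by following tight edges, since then `α(·, z)` strictly
decreases, which must stop in a finite graph. -/
lemma tight_everywhere (h : Standing w μ d)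
    (hplan : ∀ x y, Adj w x y → ∃ ρ, IsPlan w μ d x y ρ) (hα : α ∈ H1set w μ d)
    (hle : ∀ u v, Adj w u v → α u v ≤ d u v) {x₀ y₀ : V} (h0 : Adj w x₀ y₀)
    (hmax : α x₀ y₀ = d x₀ y₀) (x : V) : ∃ y, Adj w x y ∧ α x y = d x y := by
  classical
  have step : ∀ x z, Adj w x z → (∃ y, Adj w x y ∧ α x y = d x y) →
      ∃ y, Adj w z y ∧ α z y = d z y := by
    intro x z hxz hx
    by_contra hz
    obtain ⟨u, hu, hmin⟩ := Finset.exists_min_image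
      (Finset.univ.filter fun u => Adj w u z ∧ ∃ y, Adj w u y ∧ α u y = d u y) (fun u => α u z)
      ⟨x, by simpa using ⟨hxz, hx⟩⟩
    simp only [Finset.mem_filter, Finset.mem_univ, true_and] at hu hmin
    obtain ⟨huz, v, huv, hαuv⟩ := hu
    obtain ⟨ρ, hρ⟩ := hplan u v huv
    obtain ⟨z', hz'⟩ := hρ.exists_right h huz
    have hzz : z = z' := by
      by_contra hne
      obtain ⟨y, h1, h2, -⟩ := plan_step h hα hle huv hαuv hρ hz' hne
      exact hz ⟨y, h1, h2⟩
    subst hzz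
    obtain ⟨v', hv'⟩ := hρ.exists_right h huv
    obtain ⟨y, h1, h2, -⟩ := plan_step h hα hle huv hαuv hρ hv' (h.adj_ne (hρ.adj_right h hv'))
    have h3 := hmin v ⟨hρ.adj_right h hz', y, h1, h2⟩
    have h4 := plan_tight h hα hle huv hαuv hρ hz'
    rw [h.d_self, H1.antisymm hα z u] at h4
    have := h.d_pos (h.adj_ne huv)
    linarith
  obtain ⟨n, c, hc0, hcl, hc⟩ := h.conn x₀ x
  rw [← hcl]
  have : ∀ i : Fin (n + 1), ∃ y, Adj w (c i) y ∧ α (c i) y = d (c i) y := by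
    intro i
    induction i using Fin.induction with
    | zero => rw [hc0]; exact ⟨y₀, h0, hmax⟩
    | succ i ih => exact step _ _ (hc i) ih
  exact this _

end Plans

/-! ### Cross-polytopes -/

section Convex

variable {m : ℕ}

/-- If every linear functional is bounded on `S` by its values on the finite set `S'`, then `S` lies
in the convex hull of `S'`. -/
lemma subset_convexHull_of_dot {S S' : Set (Fin m → ℝ)} (hS' : S'.Finite)
    (hdom : ∀ a : Fin m → ℝ, ∀ s ∈ S, ∃ s' ∈ S', a ⬝ᵥ s ≤ a ⬝ᵥ s') :
    S ⊆ convexHull ℝ S' := by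
  intro s hs
  by_contra hns
  obtain ⟨f, u, hfu, hus⟩ := geometric_hahn_banach_closed_point (convex_convexHull ℝ S')
    (hS'.isClosed_convexHull ℝ) hns
  set a : Fin m → ℝ := fun i => f (Pi.single i 1) with ha
  have hf : ∀ v, f v = a ⬝ᵥ v := by
    intro v
    conv_lhs => rw [pi_eq_sum_univ' v]
    rw [map_sum]
    refine Finset.sum_congr rfl fun i _ => ?_
    rw [map_smul, smul_eq_mul, mul_comm, ha]
  obtain ⟨s', hs', hle⟩ := hdom a s hs
  have := hfu s' (subset_convexHull ℝ _ hs')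
  rw [hf] at this hus
  linarith

/-- A finite set `S` of at most `2m` vectors of `ℝᵐ` which separates points and whose support
function is even consists of the vectors `± b i` for some basis `b`: the extreme points of its
convex hull are symmetric and span, so there are at least `2m` of them. -/
lemma cross_polytope {S : Finset (Fin m → ℝ)} (hcard : S.card ≤ 2 * m)
    (hsym : ∀ a : Fin m → ℝ, ∀ s ∈ S, ∃ s' ∈ S, -(a ⬝ᵥ s) ≤ a ⬝ᵥ s')
    (hsep : ∀ a : Fin m → ℝ, a ≠ 0 → ∃ s ∈ S, a ⬝ᵥ s ≠ 0) :
    ∃ b : Fin m → Fin m → ℝ, LinearIndependent ℝ b ∧ (∀ i j, b i ≠ -b j) ∧ S.card = 2 * m ∧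
      (∀ v, v ∈ S ↔ ∃ i, v = b i ∨ v = -b i) ∧
      (S : Set (Fin m → ℝ)) = (convexHull ℝ (S : Set (Fin m → ℝ))).extremePoints ℝ := by
  classical
  set K := convexHull ℝ (S : Set (Fin m → ℝ)) with hK
  set X := K.extremePoints ℝ with hX
  have hXS : X ⊆ S := extremePoints_convexHull_subset
  have hnegK : ∀ v ∈ K, -v ∈ K := by
    have h1 : -(S : Set (Fin m → ℝ)) ⊆ K := by
      refine subset_convexHull_of_dot S.finite_toSet fun a s hs => ?_
      obtain ⟨s', hs', hle⟩ := hsym a (-s) hs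
      exact ⟨s', hs', by simpa using hle⟩
    intro v hv
    have h2 : convexHull ℝ (-(S : Set (Fin m → ℝ))) ⊆ K := convexHull_min h1 (convex_convexHull _ _)
    rw [convexHull_neg] at h2
    exact h2 (Set.neg_mem_neg.2 hv)
  have hnegX : ∀ v ∈ X, -v ∈ X := by
    intro v hv
    rw [hX, mem_extremePoints] at hv ⊢
    refine ⟨hnegK v hv.1, fun x₁ h₁ x₂ h₂ hseg => ?_⟩
    have := hv.2 (-x₁) (hnegK _ h₁) (-x₂) (hnegK _ h₂) ?_
    · exact ⟨neg_eq_iff_eq_neg.1 this.1, neg_eq_iff_eq_neg.1 this.2⟩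
    · obtain ⟨s, t, hs, ht, hst, he⟩ := hseg
      exact ⟨s, t, hs, ht, hst, by rw [smul_neg, smul_neg, ← neg_add, he, neg_neg]⟩
  have hspan : Submodule.span ℝ X = ⊤ := by
    by_contra hne
    obtain ⟨f, hf0, hf⟩ := Submodule.exists_le_ker_of_lt_top _ (lt_top_iff_ne_top.2 hne)
    set a : Fin m → ℝ := fun i => f (Pi.single i 1) with ha
    have hfa : ∀ v, f v = a ⬝ᵥ v := by
      intro v
      rw [LinearMap.pi_apply_eq_sum_univ f v]
      refine Finset.sum_congr rfl fun i _ => ?_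
      rw [smul_eq_mul, mul_comm, ha]
      congr 2
      ext j
      simp [Pi.single_apply, eq_comm]
    have ha0 : a ≠ 0 := by
      intro h0
      apply hf0
      ext v
      simp [hfa, h0]
    obtain ⟨s, hs, hs0⟩ := hsep a ha0
    apply hs0
    have hcomp : IsCompact K := S.finite_toSet.isCompact_convexHull ℝ
    have h1 := closure_convexHull_extremePoints hcomp (convex_convexHull ℝ _)
    have h2 : closure (convexHull ℝ X) ⊆ (LinearMap.ker f : Set (Fin m → ℝ)) := by
      refine closure_minimal (convexHull_min ?_ (Submodule.convex _))
        (Submodule.closed_of_finiteDimensional _)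
      exact fun v hv => hf (Submodule.subset_span hv)
    rw [← hfa]
    have : s ∈ K := subset_convexHull ℝ _ hs
    rw [← h1] at this
    exact h2 this
  obtain ⟨B, hBX, hBspan, hBli⟩ := exists_linearIndependent ℝ X
  rw [hspan] at hBspan
  let bas := Module.Basis.mk hBli (by rw [Subtype.range_coe, hBspan])
  have hBfin : B.Finite := S.finite_toSet.subset (hBX.trans hXS)
  have : Fintype B := hBfin.fintype
  have hBcard : Fintype.card B = m := by
    rw [← Module.finrank_eq_card_basis bas]
    simp
  let b : Fin m → Fin m → ℝ := fun i => ((Fintype.equivFinOfCardEq hBcard).symm i : B)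
  have hbli : LinearIndependent ℝ b :=
    hBli.comp _ (Fintype.equivFinOfCardEq hBcard).symm.injective
  have hbX : ∀ i, b i ∈ X := fun i => hBX (Subtype.coe_prop _)
  have hbne : ∀ i j, b i ≠ -b j := by
    intro i j he
    have h1 := Fintype.linearIndependent_iff.1 hbli (Pi.single i 1 + Pi.single j 1) (by
      simp [add_smul, Finset.sum_add_distrib, Pi.single_apply, ite_smul, he]) i
    rw [Pi.add_apply, Pi.single_eq_same] at h1
    have h2 : (0 : ℝ) ≤ (Pi.single j 1 : Fin m → ℝ) i := by
      rw [Pi.single_apply]; split_ifs <;> simp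
    linarith
  set U : Finset (Fin m → ℝ) :=
    Finset.univ.image b ∪ Finset.univ.image (fun i => -b i) with hU
  have hUcard : U.card = 2 * m := by
    rw [hU, Finset.card_union_of_disjoint, Finset.card_image_of_injective _ hbli.injective,
      Finset.card_image_of_injective _ fun i j hij => hbli.injective (neg_injective hij)]
    · simp; ring
    · rw [Finset.disjoint_left]
      simp only [Finset.mem_image, Finset.mem_univ, true_and, not_exists]
      rintro _ ⟨i, rfl⟩ j he
      exact hbne i j he.symm
  have hUX : (U : Set (Fin m → ℝ)) ⊆ X := by
    intro v hv
    simp only [hU, Finset.coe_union, Finset.coe_image, Finset.coe_univ, Set.image_univ,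
      Set.mem_union, Set.mem_range] at hv
    rcases hv with ⟨i, rfl⟩ | ⟨i, rfl⟩
    · exact hbX i
    · exact hnegX _ (hbX i)
  have hUS : U = S := Finset.eq_of_subset_of_card_le
    (fun v hv => hXS (hUX hv)) (by rw [hUcard]; exact hcard)
  refine ⟨b, hbli, hbne, hUS ▸ hUcard, fun v => ?_, Set.Subset.antisymm ?_ hXS⟩
  · rw [← hUS, hU]
    simp only [Finset.mem_union, Finset.mem_image, Finset.mem_univ, true_and, ← exists_or]
    simp only [eq_comm]
  · rw [← hUS]; exact hUX

end Convex
end Paper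

/-! ### The Betti number estimate and its rigidity -/

namespace Paper

section Coordinates

variable {V : Type*} [Fintype V] {w d : V → V → ℝ} {μ : V → ℝ}

/-- The harmonic `1`-forms as a subspace. -/
def H1sub (w : V → V → ℝ) (μ : V → ℝ) (d : V → V → ℝ) : Submodule ℝ (V → V → ℝ) where
  carrier := H1set w μ d
  zero_mem' := by simp [H1set]
  add_mem' := by
    rintro α β ⟨h1, h2, h3, h4⟩ ⟨k1, k2, k3, k4⟩
    refine ⟨fun x y => ?_, fun x y hxy => ?_, fun n c hc hX => ?_, fun x => ?_⟩
    · simp only [Pi.add_apply]; rw [h1, k1]; ring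
    · simp only [Pi.add_apply]; rw [h2 x y hxy, k2 x y hxy, add_zero]
    · simp only [Pi.add_apply]; rw [Finset.sum_add_distrib, h3 n c hc hX, k3 n c hc hX, add_zero]
    · simp only [Pi.add_apply, mul_add]; rw [Finset.sum_add_distrib, h4, k4, add_zero]
  smul_mem' := by
    rintro r α ⟨h1, h2, h3, h4⟩
    refine ⟨fun x y => ?_, fun x y hxy => ?_, fun n c hc hX => ?_, fun x => ?_⟩
    · simp only [Pi.smul_apply, smul_eq_mul]; rw [h1]; ring
    · simp only [Pi.smul_apply, smul_eq_mul]; rw [h2 x y hxy, mul_zero]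
    · simp only [Pi.smul_apply, smul_eq_mul]; rw [← Finset.mul_sum, h3 n c hc hX, mul_zero]
    · simp only [Pi.smul_apply, smul_eq_mul, mul_left_comm _ r]
      rw [← Finset.mul_sum, h4, mul_zero]

lemma finrank_H1sub : Module.finrank ℝ (H1sub w μ d) = betti1 w μ d := by
  unfold betti1
  rw [show H1set w μ d = (H1sub w μ d : Set (V → V → ℝ)) from rfl, Submodule.span_eq]

/-- Coordinates on a graph: the edges are labelled by permutations `T i` and their
inverses, and for all real `a` there is a harmonic form `A a` whose slope along `T i` is `a i`
everywhere. -/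
structure Coords (w : V → V → ℝ) (μ : V → ℝ) (d : V → V → ℝ) {m : ℕ}
    (T : Fin m → Equiv.Perm V) (A : (Fin m → ℝ) → V → V → ℝ) : Prop where
  mem : ∀ a, A a ∈ H1set w μ d
  adj : ∀ x y, Adj w x y ↔ ∃ i, y = T i x ∨ y = (T i).symm x
  val : ∀ a i x, A a x (T i x) = a i * d x (T i x)
  ne : ∀ i j x, i ≠ j → T i x ≠ T j x
  ne_symm : ∀ i j x, T i x ≠ (T j).symm x

lemma card_filter_adj (x : V) [DecidablePred (Adj w x)] :
    (Finset.univ.filter (Adj w x)).card = deg w x := by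
  unfold deg
  rw [Nat.card_eq_fintype_card, Fintype.card_subtype]

/-- Rigidity in the Betti number estimate. The slopes `e x y` of the edges at `x`, seen as
functionals on the space of harmonic forms, have a convex hull which by the maximum principle does
not depend on `x`. Sharpness forces it to be a cross-polytope whose vertices label the edges. -/
theorem exists_coords (h : Standing w μ d) [Nonempty V]
    (hplan : ∀ x y, Adj w x y → ∃ ρ, IsPlan w μ d x y ρ)
    (hdeg : ∀ x, deg w x ≤ 2 * betti1 w μ d) :
    ∃ (T : Fin (betti1 w μ d) → Equiv.Perm V) (A : (Fin (betti1 w μ d) → ℝ) → V → V → ℝ),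
      Coords w μ d T A := by
  classical
  set m := betti1 w μ d
  let β : Module.Basis (Fin m) ℝ (H1sub w μ d) :=
    Module.finBasisOfFinrankEq ℝ (H1sub w μ d) finrank_H1sub
  let A0 : (Fin m → ℝ) → V → V → ℝ := fun a => ((∑ i, a i • β i : H1sub w μ d) : V → V → ℝ)
  let e : V → V → Fin m → ℝ := fun x y i => (β i : V → V → ℝ) x y / d x y
  have hA0mem : ∀ a, A0 a ∈ H1set w μ d := fun a => (∑ i, a i • β i : H1sub w μ d).2
  have hA0apply : ∀ a x y, A0 a x y = ∑ i, a i * (β i : V → V → ℝ) x y := by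
    intro a x y
    simp [A0, Finset.sum_apply]
  have hA0 : ∀ a x y, Adj w x y → A0 a x y = (a ⬝ᵥ e x y) * d x y := by
    intro a x y hxy
    have := (h.d_pos (h.adj_ne hxy)).ne'
    rw [hA0apply, dotProduct, Finset.sum_mul]
    refine Finset.sum_congr rfl fun i _ => ?_
    simp only [e]
    field_simp
  have heanti : ∀ x y, e y x = -e x y := by
    intro x y
    ext i
    simp only [e, Pi.neg_apply]
    rw [h.d_symm y x, (β i).2.1 y x, neg_div]
  have hdanti : ∀ a x y, a ⬝ᵥ e y x = -(a ⬝ᵥ e x y) := by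
    intro a x y
    rw [heanti, dotProduct_neg]
  -- the support function of the slopes at a vertex is the same at every vertex
  have hdom : ∀ a x y x', Adj w x y → ∃ y', Adj w x' y' ∧ a ⬝ᵥ e x y ≤ a ⬝ᵥ e x' y' := by
    intro a x y x' hxy
    obtain ⟨⟨u, v⟩, huv, hmax⟩ := Finset.exists_max_image
      (Finset.univ.filter fun p : V × V => Adj w p.1 p.2) (fun p => a ⬝ᵥ e p.1 p.2)
      ⟨(x, y), by simpa using hxy⟩
    simp only [Finset.mem_filter, Finset.mem_univ, true_and, Prod.forall] at huv hmax
    have h1 := hmax x y hxy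
    rcases le_or_gt (a ⬝ᵥ e u v) 0 with hM | hM
    · obtain ⟨y', hy'⟩ := h.exists_adj x'
      have h2 := hmax y' x' (h.adj_symm hy')
      rw [hdanti] at h2
      exact ⟨y', hy', by linarith⟩
    · set M := a ⬝ᵥ e u v
      have hval : ∀ p q, Adj w p q → A0 (M⁻¹ • a) p q = (M⁻¹ * (a ⬝ᵥ e p q)) * d p q := by
        intro p q hpq
        rw [hA0 _ _ _ hpq, smul_dotProduct, smul_eq_mul]
      obtain ⟨y', hy', hty'⟩ := tight_everywhere h hplan (hA0mem (M⁻¹ • a)) (fun p q hpq => by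
        rw [hval p q hpq]
        have : M⁻¹ * (a ⬝ᵥ e p q) ≤ 1 := by
          rw [inv_mul_le_iff₀ hM, mul_one]; exact hmax p q hpq
        nlinarith [h.d_nonneg p q]) huv (by
        rw [hval u v huv, inv_mul_cancel₀ hM.ne', one_mul]) x'
      refine ⟨y', hy', ?_⟩
      rw [hval x' y' hy'] at hty'
      have hd := h.d_pos (h.adj_ne hy')
      have h3 : M⁻¹ * (a ⬝ᵥ e x' y') = 1 :=
        mul_right_cancel₀ hd.ne' (by rw [hty', one_mul])
      rw [inv_mul_eq_one₀ hM.ne'] at h3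
      rw [← h3]
      exact h1
  let N : V → Finset V := fun x => Finset.univ.filter (Adj w x)
  have hN : ∀ x y, y ∈ N x ↔ Adj w x y := by simp [N]
  have hNcard : ∀ x, (N x).card ≤ 2 * m := by
    intro x
    rw [card_filter_adj]; exact hdeg x
  let S : V → Finset (Fin m → ℝ) := fun x => (N x).image (e x)
  have hSmem : ∀ x s, s ∈ S x ↔ ∃ y, Adj w x y ∧ e x y = s := by
    intro x s
    simp only [S, Finset.mem_image, hN]
  have hpoly := fun x => cross_polytope (S := S x) (Finset.card_image_le.trans (hNcard x)) (by
      intro a s hs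
      obtain ⟨y, hy, rfl⟩ := (hSmem x s).1 hs
      obtain ⟨y', hy', hle⟩ := hdom a y x x (h.adj_symm hy)
      rw [hdanti] at hle
      exact ⟨_, (hSmem x _).2 ⟨y', hy', rfl⟩, hle⟩) (by
      intro a ha
      by_contra hno
      push Not at hno
      have hnp : ∀ u v, Adj w u v → a ⬝ᵥ e u v ≤ 0 := by
        intro u v huv
        obtain ⟨y, hy, hle⟩ := hdom a u v x huv
        rwa [hno _ ((hSmem x _).2 ⟨y, hy, rfl⟩)] at hle
      have hz : ∑ i, a i • β i = 0 := by
        apply Subtype.ext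
        ext u v
        change A0 a u v = 0
        by_cases huv : Adj w u v
        · rw [hA0 a u v huv]
          have h1 := hnp u v huv
          have h2 := hnp v u (h.adj_symm huv)
          rw [hdanti] at h2
          rw [le_antisymm h1 (by linarith), zero_mul]
        · exact (hA0mem a).2.1 u v huv
      exact ha (funext (Fintype.linearIndependent_iff.1 β.linearIndependent a hz)))
  obtain ⟨x0⟩ := ‹Nonempty V›
  obtain ⟨b, hbli, hbne, hbcard, hbmem, hbext⟩ := hpoly x0
  have hsub : ∀ x x', (S x : Set (Fin m → ℝ)) ⊆ convexHull ℝ (S x') := by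
    intro x x'
    refine subset_convexHull_of_dot (S x').finite_toSet fun a s hs => ?_
    obtain ⟨y, hy, rfl⟩ := (hSmem x s).1 hs
    obtain ⟨y', hy', hle⟩ := hdom a x y x' hy
    exact ⟨_, (hSmem x' _).2 ⟨y', hy', rfl⟩, hle⟩
  have hhull : ∀ x, convexHull ℝ (S x : Set (Fin m → ℝ)) = convexHull ℝ (S x0) := fun x =>
    Set.Subset.antisymm (convexHull_min (hsub x x0) (convex_convexHull _ _))
      (convexHull_min (hsub x0 x) (convex_convexHull _ _))
  have hSeq : ∀ x, S x = S x0 := by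
    intro x
    obtain ⟨_, -, -, -, -, hext⟩ := hpoly x
    apply Finset.coe_injective
    rw [hext, hhull x, ← hbext]
  have hinj : ∀ x y y', Adj w x y → Adj w x y' → e x y = e x y' → y = y' := by
    intro x y y' hy hy' hee
    have : (S x).card = (N x).card :=
      le_antisymm Finset.card_image_le (by rw [hSeq x, hbcard]; exact hNcard x)
    exact Finset.card_image_iff.1 this ((hN x y).2 hy) ((hN x y').2 hy') hee
  have hpos : ∀ i x, ∃ y, Adj w x y ∧ e x y = b i := fun i x =>
    (hSmem x _).1 (by rw [hSeq x, hbmem]; exact ⟨i, Or.inl rfl⟩)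
  have hneg : ∀ i x, ∃ y, Adj w x y ∧ e x y = -b i := fun i x =>
    (hSmem x _).1 (by rw [hSeq x, hbmem]; exact ⟨i, Or.inr rfl⟩)
  choose T0 hT0 hT0e using hpos
  choose T1 hT1 hT1e using hneg
  let T : Fin m → Equiv.Perm V := fun i => ⟨T0 i, T1 i, fun x =>
      hinj _ _ _ (hT1 i _) (h.adj_symm (hT0 i x)) (by rw [hT1e, heanti x, hT0e]), fun x =>
      hinj _ _ _ (hT0 i _) (h.adj_symm (hT1 i x)) (by rw [hT0e, heanti x, hT1e, neg_neg])⟩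
  have hsolve : ∀ a : Fin m → ℝ, ∃ a' : Fin m → ℝ, ∀ i, a' ⬝ᵥ b i = a i := by
    intro a
    have hu : IsUnit (Matrix.of b) := Matrix.linearIndependent_rows_iff_isUnit.1 hbli
    refine ⟨(Matrix.of b)⁻¹.mulVec a, fun i => ?_⟩
    have h1 : (Matrix.of b).mulVec ((Matrix.of b)⁻¹.mulVec a) = a := by
      rw [Matrix.mulVec_mulVec, Matrix.mul_nonsing_inv _ ((Matrix.isUnit_iff_isUnit_det _).1 hu),
        Matrix.one_mulVec]
    have h2 := congrFun h1 i
    rw [dotProduct_comm]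
    exact h2
  choose φ hφ using hsolve
  refine ⟨T, fun a => A0 (φ a), fun a => hA0mem _, fun x y => ⟨fun hxy => ?_, ?_⟩, ?_, ?_, ?_⟩
  · have : e x y ∈ S x := (hSmem x _).2 ⟨y, hxy, rfl⟩
    rw [hSeq x, hbmem] at this
    obtain ⟨i, hi | hi⟩ := this
    · exact ⟨i, Or.inl (hinj x _ _ hxy (hT0 i x) (hi.trans (hT0e i x).symm))⟩
    · exact ⟨i, Or.inr (hinj x _ _ hxy (hT1 i x) (hi.trans (hT1e i x).symm))⟩
  · rintro ⟨i, rfl | rfl⟩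
    · exact hT0 i x
    · exact hT1 i x
  · intro a i x
    change A0 (φ a) x (T0 i x) = a i * d x (T0 i x)
    rw [hA0 _ _ _ (hT0 i x), hT0e, hφ]
  · intro i j x hij he
    apply hij
    apply hbli.injective
    rw [← hT0e i x, ← hT0e j x]
    exact congrArg (e x) he
  · intro i j x he
    apply hbne i j
    rw [← hT0e i x, ← hT1e j x]
    exact congrArg (e x) he

end Coordinates
end Paper

/-! ### Rigidity of the transport along coordinate directions -/

namespace Paper

section Rigidity

variable {V : Type*} [Fintype V] {w d : V → V → ℝ} {μ : V → ℝ} {m : ℕ}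
  {T : Fin m → Equiv.Perm V} {A : (Fin m → ℝ) → V → V → ℝ}

lemma sign_mul_self (ε : ℤˣ) : ((ε : ℤ) : ℝ) * ((ε : ℤ) : ℝ) = 1 := by
  rcases Int.units_eq_one_or ε with rfl | rfl <;> simp

lemma abs_sign (ε : ℤˣ) : |((ε : ℤ) : ℝ)| = 1 := by
  rcases Int.units_eq_one_or ε with rfl | rfl <;> simp

namespace Coords

lemma adj' (hc : Coords w μ d T A) {x y : V} :
    Adj w x y ↔ ∃ (i : Fin m) (ε : ℤˣ), y = (T i ^ (ε : ℤ)) x := by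
  rw [hc.adj]
  refine exists_congr fun i => ⟨?_, ?_⟩
  · rintro (rfl | rfl)
    · exact ⟨1, by simp⟩
    · exact ⟨-1, by simp⟩
  · rintro ⟨ε, rfl⟩
    rcases Int.units_eq_one_or ε with rfl | rfl
    · left; simp
    · right; simp

lemma adj_zpow (hc : Coords w μ d T A) (x : V) (i : Fin m) (ε : ℤˣ) :
    Adj w x ((T i ^ (ε : ℤ)) x) := hc.adj'.2 ⟨i, ε, rfl⟩

lemma val' (h : Standing w μ d) (hc : Coords w μ d T A) (a : Fin m → ℝ) (i : Fin m) (ε : ℤˣ)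
    (x : V) : A a x ((T i ^ (ε : ℤ)) x) = ((ε : ℤ) : ℝ) * a i * d x ((T i ^ (ε : ℤ)) x) := by
  rcases Int.units_eq_one_or ε with rfl | rfl
  · simp [hc.val]
  · obtain ⟨y, rfl⟩ := (T i).surjective x
    have := hc.val a i y
    have hy : (T i)⁻¹ (T i y) = y := (T i).symm_apply_apply y
    simp only [Units.val_neg, Units.val_one, zpow_neg, zpow_one, hy,
      Int.cast_neg, Int.cast_one, neg_mul, one_mul]
    rw [H1.antisymm (hc.mem a), hc.val, h.d_symm]

lemma zpow_inj (hc : Coords w μ d T A) {i j : Fin m} {ε η : ℤˣ} {x : V}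
    (he : (T i ^ (ε : ℤ)) x = (T j ^ (η : ℤ)) x) : i = j ∧ ε = η := by
  rcases Int.units_eq_one_or ε with rfl | rfl <;> rcases Int.units_eq_one_or η with rfl | rfl
  · by_contra hne
    refine hc.ne i j x (fun hij => hne ⟨hij, rfl⟩) (by simpa using he)
  · exact absurd (by simpa using he) (hc.ne_symm i j x)
  · exact absurd (by simpa using he.symm) (hc.ne_symm j i x)
  · by_contra hne
    simp only [Units.val_neg, Units.val_one, zpow_neg, zpow_one] at he
    refine hc.ne i j ((T i)⁻¹ x) (fun hij => hne ⟨hij, rfl⟩) ?_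
    rw [he]
    nth_rewrite 1 [← he]
    simp

lemma le (h : Standing w μ d) (hc : Coords w μ d T A) {a : Fin m → ℝ} (ha : ∀ i, |a i| ≤ 1)
    (x y : V) (hxy : Adj w x y) : A a x y ≤ d x y := by
  obtain ⟨i, ε, rfl⟩ := hc.adj'.1 hxy
  rw [hc.val' h]
  have h1 : ((ε : ℤ) : ℝ) * a i ≤ 1 := by
    refine (le_abs_self _).trans ?_
    rw [abs_mul, abs_sign, one_mul]
    exact ha i
  nlinarith [h.d_nonneg x ((T i ^ (ε : ℤ)) x)]

lemma single_le (i : Fin m) (ε : ℤˣ) (k : Fin m) :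
    |(Pi.single i ((ε : ℤ) : ℝ) : Fin m → ℝ) k| ≤ 1 := by
  rw [Pi.single_apply]
  split_ifs
  · rw [abs_sign]
  · simp

/-- The form of slope `ε` in direction `i` and `0` in the others is tight along `T i ^ ε`. -/
lemma single_tight (h : Standing w μ d) (hc : Coords w μ d T A) (i : Fin m) (ε : ℤˣ) (x : V) :
    A (Pi.single i ((ε : ℤ) : ℝ)) x ((T i ^ (ε : ℤ)) x) = d x ((T i ^ (ε : ℤ)) x) := by
  rw [hc.val' h, Pi.single_eq_same, sign_mul_self, one_mul]

/-- A plan along an edge of direction `i` transports an edge of direction `j ≠ i` to an edge of the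
same direction, sign and length: `plan_tight` holds for all forms of slope `ε` in direction `i`, and
the slopes in the other directions can be varied independently. -/
lemma pairing (h : Standing w μ d) (hc : Coords w μ d T A) {i j k : Fin m} {ε η ζ : ℤˣ} {x : V}
    {ρ : V → V → ℝ} (hρ : IsPlan w μ d x ((T i ^ (ε : ℤ)) x) ρ)
    (huv : 0 < ρ ((T j ^ (η : ℤ)) x) ((T k ^ (ζ : ℤ)) ((T i ^ (ε : ℤ)) x)))
    (hijk : j ≠ i ∨ k ≠ i) :
    j = k ∧ η = ζ ∧
      d x ((T j ^ (η : ℤ)) x) =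
        d ((T i ^ (ε : ℤ)) x) ((T k ^ (ζ : ℤ)) ((T i ^ (ε : ℤ)) x)) ∧
      d ((T j ^ (η : ℤ)) x) ((T k ^ (ζ : ℤ)) ((T i ^ (ε : ℤ)) x)) =
        d x ((T i ^ (ε : ℤ)) x) := by
  set y := (T i ^ (ε : ℤ)) x with hy
  set u := (T j ^ (η : ℤ)) x with hu
  set v := (T k ^ (ζ : ℤ)) y with hv
  have key : ∀ a : Fin m → ℝ, (∀ l, |a l| ≤ 1) → a i = ((ε : ℤ) : ℝ) →
      d u v = -(((η : ℤ) : ℝ) * a j * d x u) + d x y + ((ζ : ℤ) : ℝ) * a k * d y v := by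
    intro a ha hai
    have h1 := plan_tight h (hc.mem a) (hc.le h ha) (hc.adj_zpow x i ε) (by
      rw [hc.val' h, hai, sign_mul_self, one_mul]) hρ huv
    rw [h1, H1.antisymm (hc.mem a) u x, hu, hc.val' h, hv, hc.val' h]
  have hupd : ∀ (l : Fin m) (t : ℤˣ) (l' : Fin m),
      |Function.update (Pi.single i ((ε : ℤ) : ℝ) : Fin m → ℝ) l ((t : ℤ) : ℝ) l'| ≤ 1 := by
    intro l t l'
    rw [Function.update_apply]
    split_ifs
    · rw [abs_sign]
    · exact single_le i ε l'
  have hxu := h.d_pos (h.adj_ne (hc.adj_zpow x j η))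
  have hyv := h.d_pos (h.adj_ne (hc.adj_zpow y k ζ))
  rw [← hu] at hxu
  rw [← hv] at hyv
  have k0 := key (Pi.single i ((ε : ℤ) : ℝ)) (single_le i ε) (by simp)
  have hη := sign_mul_self η
  have hζ := sign_mul_self ζ
  have hjk : j = k := by
    by_contra hjk
    rcases hijk with hj | hk
    · have k1 := key (Function.update (Pi.single i ((ε : ℤ) : ℝ)) j ((η : ℤ) : ℝ)) (hupd j η)
        (by simp [Ne.symm hj])
      simp only [Function.update_self, Function.update_of_ne (Ne.symm hjk),
        Pi.single_eq_of_ne hj, hη] at k0 k1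
      linarith
    · have k1 := key (Function.update (Pi.single i ((ε : ℤ) : ℝ)) k ((ζ : ℤ) : ℝ)) (hupd k ζ)
        (by simp [Ne.symm hk])
      simp only [Function.update_self, Function.update_of_ne hjk,
        Pi.single_eq_of_ne hk, hζ] at k0 k1
      linarith
  have hj : j ≠ i := by
    rcases hijk with hj | hk
    · exact hj
    · rwa [hjk]
  have hk : k ≠ i := hjk ▸ hj
  have k1 := key (Function.update (Pi.single i ((ε : ℤ) : ℝ)) k ((ζ : ℤ) : ℝ)) (hupd k ζ)
    (by simp [Ne.symm hk])
  have hjval : Function.update (Pi.single i ((ε : ℤ) : ℝ) : Fin m → ℝ) k ((ζ : ℤ) : ℝ) j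
      = ((ζ : ℤ) : ℝ) := by rw [hjk]; simp
  simp only [Function.update_self, hjval, Pi.single_eq_of_ne hk, Pi.single_eq_of_ne hj, hζ]
    at k0 k1
  have hd : d u v = d x y := by linarith
  have k2 : ((η : ℤ) : ℝ) * ((ζ : ℤ) : ℝ) * d x u = d y v := by linarith
  have hηζ : η = ζ := by
    rcases Int.units_eq_one_or η with rfl | rfl <;> rcases Int.units_eq_one_or ζ with rfl | rfl
    · rfl
    · simp at k2; linarith
    · simp at k2; linarith
    · rfl
  refine ⟨hjk, hηζ, ?_, hd⟩
  rw [hηζ, hζ, one_mul] at k2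
  exact k2

variable (hplan : ∀ x y, Adj w x y → ∃ ρ, IsPlan w μ d x y ρ)
include hplan

/-- Translating an edge of direction `j` in a different direction `i` preserves its transition
probability and its length. -/
lemma transverse (h : Standing w μ d) (hc : Coords w μ d T A) {i j : Fin m} (hij : j ≠ i)
    (ε η : ℤˣ) (x : V) :
    w x ((T j ^ (η : ℤ)) x) / μ x =
        w ((T i ^ (ε : ℤ)) x) ((T j ^ (η : ℤ)) ((T i ^ (ε : ℤ)) x)) / μ ((T i ^ (ε : ℤ)) x) ∧
      d x ((T j ^ (η : ℤ)) x) = d ((T i ^ (ε : ℤ)) x) ((T j ^ (η : ℤ)) ((T i ^ (ε : ℤ)) x)) ∧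
      ∃ ρ, IsPlan w μ d x ((T i ^ (ε : ℤ)) x) ρ ∧
        0 < ρ ((T j ^ (η : ℤ)) x) ((T j ^ (η : ℤ)) ((T i ^ (ε : ℤ)) x)) := by
  obtain ⟨ρ, hρ⟩ := hplan _ _ (hc.adj_zpow x i ε)
  have hrow := hρ.left ((T j ^ (η : ℤ)) x)
  rw [Finset.sum_eq_single ((T j ^ (η : ℤ)) ((T i ^ (ε : ℤ)) x))] at hrow
  rotate_left
  · intro v _ hv
    by_contra h0
    have hpos := lt_of_le_of_ne (hρ.nonneg _ _) (Ne.symm h0)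
    obtain ⟨k, ζ, rfl⟩ := hc.adj'.1 (hρ.adj_right h hpos)
    obtain ⟨rfl, rfl, -, -⟩ := hc.pairing h hρ hpos (Or.inl hij)
    exact hv rfl
  · simp
  have hcol := hρ.right ((T j ^ (η : ℤ)) ((T i ^ (ε : ℤ)) x))
  rw [Finset.sum_eq_single ((T j ^ (η : ℤ)) x)] at hcol
  rotate_left
  · intro u _ hu
    by_contra h0
    have hpos := lt_of_le_of_ne (hρ.nonneg _ _) (Ne.symm h0)
    obtain ⟨k, ζ, rfl⟩ := hc.adj'.1 (hρ.adj_left h hpos)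
    obtain ⟨rfl, rfl, -, -⟩ := hc.pairing h hρ hpos (Or.inr hij)
    exact hu rfl
  · simp
  have hpos : 0 < ρ ((T j ^ (η : ℤ)) x) ((T j ^ (η : ℤ)) ((T i ^ (ε : ℤ)) x)) := by
    rw [hrow]
    exact h.p_pos.2 (hc.adj_zpow x j η)
  exact ⟨hrow.symm.trans hcol, (hc.pairing h hρ hpos (Or.inl hij)).2.2.1, ρ, hρ, hpos⟩

lemma commute (h : Standing w μ d) (hc : Coords w μ d T A) (i j : Fin m) (x : V) :
    T i (T j x) = T j (T i x) := by
  by_cases hij : j = i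
  · rw [hij]
  obtain ⟨-, -, ρ, hρ, hpos⟩ := hc.transverse hplan h hij 1 1 x
  have hd := (hc.pairing h hρ hpos (Or.inl hij)).2.2.2
  have hinv := (hc.transverse hplan h (Ne.symm hij) 1 1 x).2.1
  have hne := h.d_pos (h.adj_ne (hc.adj_zpow x i 1))
  obtain ⟨z, hz, hzt, hzd⟩ := plan_step h (hc.mem _) (hc.le h (single_le i 1))
    (hc.adj_zpow x i 1) (hc.single_tight h i 1 x) hρ hpos (by
      intro he
      rw [he, h.d_self] at hd
      linarith)
  obtain ⟨k, ζ, rfl⟩ := hc.adj'.1 hz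
  have hz0 := h.d_pos (h.adj_ne hz)
  rw [hc.val' h] at hzt
  have h1 := mul_right_cancel₀ hz0.ne' (hzt.trans (one_mul _).symm)
  have hki : k = i := by
    by_contra hki
    rw [Pi.single_eq_of_ne hki, mul_zero] at h1
    exact zero_ne_one h1
  subst hki
  have hζ : ζ = 1 := by
    rcases Int.units_eq_one_or ζ with rfl | rfl
    · rfl
    · simp at h1
      linarith
  subst hζ
  simp only [Units.val_one, zpow_one] at hzd hd hinv
  refine (h.dist.2.1 _ _).1 ?_
  linarith

lemma longitudinal_le (h : Standing w μ d) (hc : Coords w μ d T A) (i : Fin m) (ε : ℤˣ) (x : V) :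
    w x ((T i ^ (ε : ℤ)) x) / μ x ≤
      w ((T i ^ (ε : ℤ)) x) ((T i ^ (ε : ℤ)) ((T i ^ (ε : ℤ)) x)) / μ ((T i ^ (ε : ℤ)) x) := by
  obtain ⟨ρ, hρ⟩ := hplan _ _ (hc.adj_zpow x i ε)
  have hrow := hρ.left ((T i ^ (ε : ℤ)) x)
  rw [Finset.sum_eq_single ((T i ^ (ε : ℤ)) ((T i ^ (ε : ℤ)) x))] at hrow
  rotate_left
  · intro v _ hv
    by_contra h0
    have hpos := lt_of_le_of_ne (hρ.nonneg _ _) (Ne.symm h0)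
    obtain ⟨k, ζ, rfl⟩ := hc.adj'.1 (hρ.adj_right h hpos)
    by_cases hki : k = i
    · subst hki
      have hζ : ζ = -ε := by
        rcases Int.units_eq_one_or ζ with rfl | rfl <;>
          rcases Int.units_eq_one_or ε with rfl | rfl <;> simp_all
      subst hζ
      have h1 := plan_tight h (hc.mem _) (hc.le h (single_le k ε))
        (hc.adj_zpow x k ε) (hc.single_tight h k ε x) hρ hpos
      have hd := h.d_pos (h.adj_ne (hc.adj_zpow x k ε))
      have hback : (T k ^ ((-ε : ℤˣ) : ℤ)) ((T k ^ (ε : ℤ)) x) = x := by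
        simp
      rw [hback, H1.antisymm (hc.mem _), hc.single_tight h, h.d_symm] at h1
      linarith
    · exact hki (hc.pairing h hρ hpos (Or.inr hki)).1.symm
  · simp
  rw [← hrow, ← hρ.right]
  exact Finset.single_le_sum (f := fun u => ρ u ((T i ^ (ε : ℤ)) ((T i ^ (ε : ℤ)) x))) (fun u _ => hρ.nonneg u _) (Finset.mem_univ _)

omit hplan in
lemma const_of_invariant (h : Standing w μ d) (hc : Coords w μ d T A) {f : V → ℝ}
    (hf : ∀ i x, f (T i x) = f x) (x y : V) : f x = f y := by
  obtain ⟨n, c, hc0, hcl, hcc⟩ := h.conn x y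
  have : ∀ i : Fin (n + 1), f x = f (c i) := by
    intro i
    induction i using Fin.induction with
    | zero => rw [hc0]
    | succ i ih =>
      rw [ih]
      obtain ⟨j, hj | hj⟩ := (hc.adj _ _).1 (hcc i)
      · rw [hj, hf]
      · rw [hj]
        conv_lhs => rw [← (T j).apply_symm_apply (c i.castSucc), hf]
  rw [this (Fin.last n), hcl]

/-- Along its own direction, the transition probability is monotone, hence constant since
`T i ^ ε` permutes a finite set; thus it is constant on the whole graph. -/
lemma p_const (h : Standing w μ d) (hc : Coords w μ d T A) (j : Fin m) (η : ℤˣ) (x y : V) :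
    w x ((T j ^ (η : ℤ)) x) / μ x = w y ((T j ^ (η : ℤ)) y) / μ y := by
  have hlong : ∀ x, w x ((T j ^ (η : ℤ)) x) / μ x =
      w ((T j ^ (η : ℤ)) x) ((T j ^ (η : ℤ)) ((T j ^ (η : ℤ)) x)) / μ ((T j ^ (η : ℤ)) x) := by
    have hsum := Equiv.sum_comp (T j ^ (η : ℤ)) fun x => w x ((T j ^ (η : ℤ)) x) / μ x
    have := (Finset.sum_eq_sum_iff_of_le fun x (_ : x ∈ Finset.univ) =>
      hc.longitudinal_le hplan h j η x).1 hsum.symm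
    exact fun x => this x (Finset.mem_univ x)
  refine hc.const_of_invariant h (f := fun x => w x ((T j ^ (η : ℤ)) x) / μ x) ?_ x y
  intro i x
  by_cases hij : j = i
  · subst hij
    rcases Int.units_eq_one_or η with rfl | rfl
    · simpa using (hlong x).symm
    · simpa using hlong (T j x)
  · simpa using (hc.transverse hplan h hij 1 η x).1.symm

lemma w_swap (h : Standing w μ d) (hc : Coords w μ d T A) (j : Fin m) (x : V) :
    w x (T j x) / μ x = w x ((T j).symm x) / μ x ∧ μ (T j x) = μ x := by
  obtain ⟨p, hp⟩ : ∃ p, p = w x (T j x) / μ x := ⟨_, rfl⟩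
  obtain ⟨q, hq⟩ : ∃ q, q = w x ((T j).symm x) / μ x := ⟨_, rfl⟩
  have h1 : ∀ y, w y (T j y) = p * μ y := by
    intro y
    have := hc.p_const hplan h j 1 x y
    simp only [Units.val_one, zpow_one] at this
    rw [hp, this, div_mul_cancel₀ _ (h.graph.mu_pos y).ne']
  have h2 : ∀ y, w y (T j y) = q * μ (T j y) := by
    intro y
    have := hc.p_const hplan h j (-1) x (T j y)
    have hy : (T j)⁻¹ (T j y) = y := (T j).symm_apply_apply y
    simp only [Units.val_neg, Units.val_one, zpow_neg, zpow_one, hy] at this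
    change w x ((T j).symm x) / μ x = _ at this
    rw [hq, this, div_mul_cancel₀ _ (h.graph.mu_pos _).ne', h.graph.symm]
  have hM : 0 < ∑ y, μ y := Finset.sum_pos (fun y _ => h.graph.mu_pos y) ⟨x, Finset.mem_univ x⟩
  have hpq : p = q := by
    have h3 : ∑ y, p * μ y = ∑ y, q * μ (T j y) :=
      Finset.sum_congr rfl fun y _ => by rw [← h1, h2]
    rw [← Finset.mul_sum, ← Finset.mul_sum, Equiv.sum_comp (T j) μ] at h3
    exact mul_right_cancel₀ hM.ne' h3
  refine ⟨by rw [← hp, ← hq, hpq], ?_⟩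
  have hp0 : 0 < p := by
    rw [hp]
    exact h.p_pos.2 ((hc.adj _ _).2 ⟨j, Or.inl rfl⟩)
  have := (h1 x).symm.trans (h2 x)
  rw [← hpq] at this
  exact (mul_left_cancel₀ hp0.ne' this).symm

lemma mu_const (h : Standing w μ d) (hc : Coords w μ d T A) (x y : V) : μ x = μ y :=
  hc.const_of_invariant h (fun j x => (hc.w_swap hplan h j x).2) x y

lemma w_const (h : Standing w μ d) (hc : Coords w μ d T A) (j : Fin m) (x y : V) :
    w x (T j x) = w y (T j y) := by
  have := hc.p_const hplan h j 1 x y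
  simp only [Units.val_one, zpow_one] at this
  rw [hc.mu_const hplan h y x] at this
  exact (div_left_inj' (h.graph.mu_pos x).ne').1 this

lemma d_const (h : Standing w μ d) (hc : Coords w μ d T A) (j : Fin m) (x y : V) :
    d x (T j x) = d y (T j y) := by
  classical
  refine hc.const_of_invariant h (f := fun x => d x (T j x)) (fun i x => ?_) x y
  by_cases hij : j = i
  · subst hij
    set z := T j x with hz
    have hx : (T j).symm z = x := by rw [hz, Equiv.symm_apply_apply]
    -- the divergence of the form of slope `1` in direction `j` only sees the two edges at `z`
    have h1 := (hc.mem (Pi.single j 1)).2.2.2 z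
    rw [Finset.sum_eq_add (T j z) ((T j).symm z) (hc.ne_symm j j z)] at h1
    rotate_left
    · rintro v - ⟨hv1, hv2⟩
      by_cases hv : Adj w z v
      · obtain ⟨k, hk⟩ := (hc.adj _ _).1 hv
        have hkj : k ≠ j := by
          rintro rfl
          exact hk.elim hv1 hv2
        obtain ⟨l, ζ, rfl⟩ := hc.adj'.1 hv
        have hlj : l ≠ j := by
          rintro rfl
          rcases Int.units_eq_one_or ζ with rfl | rfl
          · simp at hv1
          · simp at hv2
        rw [hc.val' h, Pi.single_eq_of_ne hlj]
        ring
      · rw [(hc.mem _).2.1 z v hv, mul_zero]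
    · simp
    · simp
    have h2 := hc.w_swap hplan h j z
    have hp := h.p_pos.2 ((hc.adj z (T j z)).2 ⟨j, Or.inl rfl⟩)
    rw [← h2.1, ← mul_add, hc.val, hx, H1.antisymm (hc.mem _) z x, hz, hc.val, ← hz] at h1
    have h3 := (mul_eq_zero.1 h1).resolve_left hp.ne'
    simp only [Pi.single_eq_same, one_mul] at h3
    linarith
  · simpa using (hc.transverse hplan h hij 1 1 x).2.1.symm

end Coords

end Rigidity
end Paper

/-! ### The group structure -/

namespace Paper

section Group

variable {V : Type*} {m : ℕ}

/-- Commuting permutations generating a transitive group `Γ`: such a group acts simply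
transitively, so its structure can be transported to `V` along an orbit map. -/
lemma exists_commGroup [Nonempty V] (T : Fin m → Equiv.Perm V)
    (hcomm : ∀ i j x, T i (T j x) = T j (T i x))
    (htrans : ∀ x y, ∃ g ∈ Subgroup.closure (Set.range T), g x = y) :
    ∃ (_ : CommGroup V) (a : Fin m → V), (∀ i x, a i * x = T i x) ∧
      (∀ i x, (a i)⁻¹ * x = (T i).symm x) ∧ Subgroup.closure (Set.range a) = ⊤ := by
  obtain ⟨v₀⟩ := ‹Nonempty V›
  let Γ := Subgroup.closure (Set.range T)
  have : IsMulCommutative Γ := Subgroup.isMulCommutative_closure (by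
    rintro _ ⟨i, rfl⟩ _ ⟨j, rfl⟩
    ext x
    exact hcomm i j x)
  let _ : CommGroup Γ := { (inferInstance : Group Γ) with mul_comm := this.is_comm.comm }
  have hbij : Function.Bijective fun g : Γ => (g : Equiv.Perm V) v₀ := by
    refine ⟨fun g g' hgg => ?_, fun y => ?_⟩
    · apply Subtype.ext
      ext y
      obtain ⟨k, hk, rfl⟩ := htrans v₀ y
      have h1 := congrArg (fun t : Γ => (t : Equiv.Perm V) v₀) (mul_comm g ⟨k, hk⟩)
      have h2 := congrArg (fun t : Γ => (t : Equiv.Perm V) v₀) (mul_comm g' ⟨k, hk⟩)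
      change (g : Equiv.Perm V) (k v₀) = k ((g : Equiv.Perm V) v₀) at h1
      change (g' : Equiv.Perm V) (k v₀) = k ((g' : Equiv.Perm V) v₀) at h2
      rw [h1, h2]
      exact congrArg k hgg
    · obtain ⟨g, hg, hgy⟩ := htrans v₀ y
      exact ⟨⟨g, hg⟩, hgy⟩
  let e : Γ ≃ V := Equiv.ofBijective _ hbij
  let inst : CommGroup V := e.symm.commGroup
  let a : Fin m → V := fun i => e ⟨T i, Subgroup.subset_closure ⟨i, rfl⟩⟩
  have hmul : ∀ i x, a i * x = T i x := by
    intro i x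
    obtain ⟨g, rfl⟩ := e.surjective x
    change e (e.symm (e _) * e.symm (e g)) = _
    rw [Equiv.symm_apply_apply, Equiv.symm_apply_apply]
    rfl
  have hinv : ∀ i x, (a i)⁻¹ * x = (T i).symm x := by
    intro i x
    rw [Equiv.eq_symm_apply, ← hmul, mul_inv_cancel_left]
  refine ⟨inst, a, hmul, hinv, ?_⟩
  rw [Subgroup.eq_top_iff']
  intro x
  obtain ⟨g, hg, rfl⟩ := htrans 1 x
  have key : ∀ y, y ∈ Subgroup.closure (Set.range a) ↔ g y ∈ Subgroup.closure (Set.range a) := by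
    induction hg using Subgroup.closure_induction with
    | mem g hg =>
      obtain ⟨i, rfl⟩ := hg
      intro y
      rw [← hmul]
      have hai : a i ∈ Subgroup.closure (Set.range a) := Subgroup.subset_closure ⟨i, rfl⟩
      exact (Subgroup.mul_mem_cancel_left _ hai).symm
    | one => intro y; rfl
    | mul g g' _ _ ih ih' =>
      intro y
      rw [Equiv.Perm.mul_apply, ← ih, ← ih']
    | inv g _ ih =>
      intro y
      rw [ih (g⁻¹ y), ← Equiv.Perm.mul_apply, mul_inv_cancel, Equiv.Perm.one_apply]
  rw [← key]
  exact one_mem _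

end Group

section Torus

variable {V : Type*} [Fintype V] {w d : V → V → ℝ} {μ : V → ℝ}

/-- Non-negative curvature `κ₁` and the extremal Betti number make the graph a flat torus. -/
theorem exists_flatTorus (h : Standing w μ d) [Nonempty V]
    (hplan : ∀ x y, Adj w x y → ∃ ρ, IsPlan w μ d x y ρ)
    (hdeg : ∀ x, deg w x ≤ 2 * betti1 w μ d) :
    ∃ (_ : CommGroup V) (m : ℕ) (a : Fin m → V), IsFlatTorus a w μ d ∧ (∀ x y : V, μ x = μ y) ∧
      ParallelEdgesSameLength a d := by
  obtain ⟨T, A, hc⟩ := exists_coords h hplan hdeg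
  have htrans : ∀ x y, ∃ g ∈ Subgroup.closure (Set.range T), g x = y := by
    intro x y
    obtain ⟨n, c, hc0, hcl, hcc⟩ := h.conn x y
    have : ∀ i : Fin (n + 1), ∃ g ∈ Subgroup.closure (Set.range T), g x = c i := by
      intro i
      induction i using Fin.induction with
      | zero => exact ⟨1, one_mem _, hc0.symm⟩
      | succ i ih =>
        obtain ⟨g, hg, hgx⟩ := ih
        obtain ⟨j, hj⟩ := (hc.adj _ _).1 (hcc i)
        have hT : T j ∈ Subgroup.closure (Set.range T) := Subgroup.subset_closure ⟨j, rfl⟩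
        rcases hj with hj | hj
        · exact ⟨T j * g, mul_mem hT hg, by rw [Equiv.Perm.mul_apply, hgx, hj]⟩
        · exact ⟨(T j)⁻¹ * g, mul_mem (inv_mem hT) hg, by
            rw [Equiv.Perm.mul_apply, hgx, hj]; rfl⟩
    rw [← hcl]
    exact this _
  obtain ⟨inst, a, hmul, hinv, htop⟩ := exists_commGroup T (hc.commute hplan h) htrans
  have hw : ∀ i (x y : V), w x (a i * x) = w y (a i * y) := by
    intro i x y
    rw [hmul, hmul]
    exact hc.w_const hplan h i x y
  have hdd : ∀ i (x y : V), d x (a i * x) = d y (a i * y) := by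
    intro i x y
    rw [hmul, hmul]
    exact hc.d_const hplan h i x y
  have hback : ∀ i (x y : V), w x ((a i)⁻¹ * x) = w y (a i * y) := by
    intro i x y
    rw [h.graph.symm, ← hw i ((a i)⁻¹ * x) y, mul_inv_cancel_left]
  have hdback : ∀ i (x y : V), d x ((a i)⁻¹ * x) = d y (a i * y) := by
    intro i x y
    rw [h.d_symm, ← hdd i ((a i)⁻¹ * x) y, mul_inv_cancel_left]
  refine ⟨inst, _, a, ⟨htop, fun i j hij => ⟨fun he => ?_, fun he => ?_⟩, h.dist, fun x y => ?_,
    fun x i => ?_, fun x i j ε η _ hε _ => ?_, fun x i j _ => hdd i _ _, rfl⟩,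
    hc.mu_const hplan h, hdd⟩
  · refine hc.ne i j 1 hij ?_
    rw [← hmul, ← hmul, he]
  · refine hc.ne_symm i j 1 ?_
    rw [← hmul, ← hinv, he]
  · rw [hc.adj]
    simp only [hmul, hinv]
  · rw [hback i x x, hdback i x x]
  · rw [hc.mu_const hplan h (a j ^ η * x) x]
    rcases hε with rfl | rfl
    · rw [zpow_one, hw i x (a j ^ η * x)]
    · rw [zpow_neg, zpow_one, hback i x x, hback i _ x]

end Torus
end Paper

/-! ### Wasserstein distance and curvature -/

namespace Paper

section Transport

variable {V : Type*} [Fintype V] {w d : V → V → ℝ} {μ : V → ℝ}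

/-- The infimum defining the Wasserstein distance is attained, by compactness of the set of
couplings. -/
lemma exists_optimal (d : V → V → ℝ) {ν₁ ν₂ : V → ℝ} (h1 : ∀ x, 0 ≤ ν₁ x) (h2 : ∀ x, 0 ≤ ν₂ x)
    (s1 : ∑ x, ν₁ x = 1) (s2 : ∑ x, ν₂ x = 1) :
    ∃ ρ : V → V → ℝ, ((∀ x y, 0 ≤ ρ x y ∧ ρ x y ≤ 1) ∧
      (∀ x, ∑ y, ρ x y = ν₁ x) ∧ (∀ y, ∑ x, ρ x y = ν₂ y)) ∧
      ∑ x, ∑ y, ρ x y * d x y = Wasserstein d ν₁ ν₂ := by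
  set C : Set (V → V → ℝ) := {ρ | (∀ x y, 0 ≤ ρ x y ∧ ρ x y ≤ 1) ∧
      (∀ x, ∑ y, ρ x y = ν₁ x) ∧ (∀ y, ∑ x, ρ x y = ν₂ y)} with hC
  have hcont : ∀ x y, Continuous fun ρ : V → V → ℝ => ρ x y := fun x y => by fun_prop
  have hclosed : IsClosed C := by
    have e : C = (⋂ x, ⋂ y, {ρ | 0 ≤ ρ x y ∧ ρ x y ≤ 1}) ∩
        ((⋂ x, {ρ | ∑ y, ρ x y = ν₁ x}) ∩ ⋂ y, {ρ | ∑ x, ρ x y = ν₂ y}) := by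
      ext ρ; simp [hC]
    rw [e]
    refine IsClosed.inter (isClosed_iInter fun x => isClosed_iInter fun y => ?_)
      (IsClosed.inter (isClosed_iInter fun x => ?_) (isClosed_iInter fun y => ?_))
    · exact (isClosed_le continuous_const (hcont x y)).inter
        (isClosed_le (hcont x y) continuous_const)
    · exact isClosed_eq (continuous_finsetSum _ fun y _ => hcont x y) continuous_const
    · exact isClosed_eq (continuous_finsetSum _ fun x _ => hcont x y) continuous_const
  have hcomp : IsCompact C := (isCompact_Icc (a := (0 : V → V → ℝ)) (b := 1)).of_isClosed_subset
    hclosed fun ρ hρ => ⟨fun x y => (hρ.1 x y).1, fun x y => (hρ.1 x y).2⟩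
  have hne : C.Nonempty := by
    have b : ∀ {ν : V → ℝ}, (∀ x, 0 ≤ ν x) → ∑ x, ν x = 1 → ∀ x, ν x ≤ 1 := fun h0 h1 x =>
      h1 ▸ Finset.single_le_sum (fun x _ => h0 x) (Finset.mem_univ x)
    refine ⟨fun x y => ν₁ x * ν₂ y, fun x y => ⟨mul_nonneg (h1 x) (h2 y),
      mul_le_one₀ (b h1 s1 x) (h2 y) (b h2 s2 y)⟩, fun x => ?_, fun y => ?_⟩
    · rw [← Finset.mul_sum, s2, mul_one]
    · rw [← Finset.sum_mul, s1, one_mul]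
  obtain ⟨ρ, hρ, hmin⟩ := hcomp.exists_isMinOn hne
    (f := fun ρ => ∑ x, ∑ y, ρ x y * d x y) (by fun_prop)
  refine ⟨ρ, hρ, ?_⟩
  have hleast : IsLeast { s : ℝ | ∃ ρ : V → V → ℝ, (∀ x y, 0 ≤ ρ x y ∧ ρ x y ≤ 1) ∧
      (∀ x, ∑ y, ρ x y = ν₁ x) ∧ (∀ y, ∑ x, ρ x y = ν₂ y) ∧
      s = ∑ x, ∑ y, ρ x y * d x y } (∑ x, ∑ y, ρ x y * d x y) := by
    refine ⟨⟨ρ, hρ.1, hρ.2.1, hρ.2.2, rfl⟩, ?_⟩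
    rintro s ⟨ρ', h1, h2, h3, rfl⟩
    exact hmin ⟨h1, h2, h3⟩
  exact hleast.csInf_eq.symm

variable [DecidableEq V]

lemma Standing.idle_eq (h : Standing w μ d) (ε : ℝ) (x y : V) :
    idleMeasure w μ ε x y = (if y = x then 1 - ε else 0) + ε * (w x y / μ x) := by
  unfold idleMeasure
  split_ifs with hxy
  · rw [hxy, h.graph.loopless]; simp
  · simp

lemma Standing.idle_nonneg (h : Standing w μ d) {ε : ℝ} (h0 : 0 ≤ ε) (h1 : ε ≤ 1) (x y : V) :
    0 ≤ idleMeasure w μ ε x y := by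
  unfold idleMeasure
  split_ifs
  · linarith
  · exact mul_nonneg h0 (h.p_nonneg x y)

lemma Standing.sum_idle_mul (h : Standing w μ d) (ε : ℝ) (x : V) (f : V → ℝ) :
    ∑ y, idleMeasure w μ ε x y * f y = (1 - ε) * f x + ε * ∑ y, w x y / μ x * f y := by
  simp_rw [h.idle_eq, add_mul, Finset.sum_add_distrib, ite_mul, zero_mul, Finset.mul_sum]
  rw [Finset.sum_ite_eq' Finset.univ x]
  simp [mul_assoc]

lemma Standing.sum_idle (h : Standing w μ d) (ε : ℝ) (x : V) :
    ∑ y, idleMeasure w μ ε x y = 1 := by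
  have := h.sum_idle_mul ε x fun _ => 1
  simp only [mul_one] at this
  rw [this, h.sum_p]
  ring

lemma exists_plan (h : Standing w μ d) {x y : V} (hxy : Adj w x y)
    (hk : 0 ≤ kappaIdle w μ d 1 x y) : ∃ ρ, IsPlan w μ d x y ρ := by
  obtain ⟨ρ, ⟨hρ, hl, hr⟩, hcost⟩ := exists_optimal d
    (h.idle_nonneg zero_le_one le_rfl x) (h.idle_nonneg zero_le_one le_rfl y)
    (h.sum_idle 1 x) (h.sum_idle 1 y)
  have hd := h.d_pos (h.adj_ne hxy)
  refine ⟨ρ, fun u v => (hρ u v).1, fun u => ?_, fun v => ?_, ?_⟩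
  · rw [hl, h.idle_eq]; simp
  · rw [hr, h.idle_eq]; simp
  · rw [hcost]
    unfold kappaIdle at hk
    rwa [sub_nonneg, div_le_one hd] at hk

omit [DecidableEq V] in
/-- A function which is `1`-Lipschitz along edges is `1`-Lipschitz. -/
lemma Standing.lipschitz (h : Standing w μ d) {f : V → ℝ}
    (hf : ∀ u v, Adj w u v → f v - f u ≤ d u v) (u v : V) : f v - f u ≤ d u v := by
  obtain ⟨k, P, hP⟩ := h.exists_geo u v
  have := (GeoSum.of_geo (α := fun u v => f v - f u) hP).le h hf
  rwa [Finset.sum_range_sub (fun i => f (P i)), hP.1, hP.2.1] at this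

omit [DecidableEq V] in
/-- A plan witnessing `κ₁(x,y) ≥ 0` also shows `κ(x,y) ≥ 0`: it transports every admissible function,
which gains `d x y` from `x` to `y` and is `1`-Lipschitz, at no larger gain. -/
lemma kappa_nonneg_of_plan (h : Standing w μ d) {x y : V} (hxy : Adj w x y)
    {ρ : V → V → ℝ} (hρ : IsPlan w μ d x y ρ) : 0 ≤ kappa w μ d x y := by
  refine Real.sInf_nonneg ?_
  rintro _ ⟨f, hfxy, hnorm, rfl⟩
  have hd := h.d_pos (h.adj_ne hxy)
  have hbdd : BddAbove { r : ℝ | ∃ x y, Adj w x y ∧ r = |grad d f x y| } := by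
    refine (Set.Finite.subset (Set.finite_range fun p : V × V => |grad d f p.1 p.2|) ?_).bddAbove
    rintro _ ⟨u, v, -, rfl⟩
    exact ⟨(u, v), rfl⟩
  have hlip := h.lipschitz (f := f) (fun u v huv => by
    have h1 : |grad d f v u| ≤ 1 := hnorm ▸ le_csSup hbdd ⟨v, u, h.adj_symm huv, rfl⟩
    have h2 := (abs_le.1 h1).2
    rwa [grad, h.d_symm v u, div_le_one (h.d_pos (h.adj_ne huv))] at h2)
  have hfd : f y - f x = d x y := by
    rw [grad, h.d_symm y x, div_eq_one_iff_eq hd.ne'] at hfxy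
    exact hfxy
  have hlap : ∀ z, lap w μ f z = ∑ u, w z u / μ z * f u - f z := by
    intro z
    simp_rw [lap, mul_sub, Finset.sum_sub_distrib, ← Finset.sum_mul]
    rw [h.sum_p, one_mul]
  have hsum : ∑ u, w y u / μ y * f u - ∑ u, w x u / μ x * f u ≤ d x y := by
    have e : ∑ u, w y u / μ y * f u - ∑ u, w x u / μ x * f u =
        ∑ u, ∑ v, ρ u v * (f v - f u) := by
      simp_rw [mul_sub, Finset.sum_sub_distrib, ← Finset.sum_mul, hρ.left]
      rw [Finset.sum_comm]
      simp_rw [← Finset.sum_mul, hρ.right]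
    rw [e]
    refine le_trans (Finset.sum_le_sum fun u _ => Finset.sum_le_sum fun v _ =>
      mul_le_mul_of_nonneg_left (hlip u v) (hρ.nonneg u v)) hρ.cost
  rw [grad, hlap, hlap]
  refine div_nonneg ?_ hd.le
  linarith

end Transport

/-! ### Flat tori are sharp and bone-idle -/

section FlatTorus

variable {V : Type*} [Fintype V] {w d : V → V → ℝ} {μ : V → ℝ}

/-- A translation of the graph along the edge from `x` to `y`: a weight-preserving permutation
moving all vertices by `d x y` and mapping `x` to `y`. -/
structure IsTranslation (w : V → V → ℝ) (d : V → V → ℝ) (x y : V) (σ : Equiv.Perm V) : Prop where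
  map : σ x = y
  weight : ∀ u v, w (σ u) (σ v) = w u v
  dist : ∀ u, d u (σ u) = d x y

lemma torus_translation (h : Standing w μ d) [CommGroup V] {m : ℕ} {a : Fin m → V}
    (ht : IsFlatTorus a w μ d) (hμ : ∀ x y, μ x = μ y) (hpar : ParallelEdgesSameLength a d)
    {x y : V} (hxy : Adj w x y) : ∃ σ, IsTranslation w d x y σ := by
  obtain ⟨htop, -, -, hadj, h2, h3, -, -⟩ := ht
  have hA : ∀ j x, Adj w x (a j * x) := fun j x => (hadj _ _).2 ⟨j, Or.inl rfl⟩
  have hback : ∀ i x, d x ((a i)⁻¹ * x) = d x (a i * x) := by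
    intro i x
    rw [h.d_symm, hpar i x ((a i)⁻¹ * x), mul_inv_cancel_left]
  have hw1 : ∀ j k x, w (a k * x) (a j * (a k * x)) = w x (a j * x) := by
    intro j k x
    by_cases hjk : j = k
    · subst hjk
      have h4 := h2 (a j * x) j
      rw [hback] at h4
      rw [mul_right_cancel₀ (h.d_pos (h.adj_ne (hA j _))).ne' h4, inv_mul_cancel_left,
        h.graph.symm]
    · have h4 := h3 x j k 1 1 hjk (Or.inl rfl) (Or.inl rfl)
      rw [zpow_one, zpow_one, hμ (a k * x) x,
        div_left_inj' (h.graph.mu_pos x).ne'] at h4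
      exact h4.symm
  have hw : ∀ j (g x : V), w (g * x) (a j * (g * x)) = w x (a j * x) := by
    intro j g
    have hg : g ∈ Subgroup.closure (Set.range a) := htop ▸ Subgroup.mem_top g
    induction hg using Subgroup.closure_induction with
    | mem g hg =>
      obtain ⟨k, rfl⟩ := hg
      exact hw1 j k
    | one => simp
    | mul g g' _ _ ih ih' =>
      intro x
      rw [mul_assoc, ih, ih']
    | inv g _ ih =>
      intro x
      rw [← ih, mul_inv_cancel_left]
  have hw' : ∀ g u v : V, w (g * u) (g * v) = w u v := by
    intro g u v
    have hle : ∀ g u v : V, Adj w u v → w (g * u) (g * v) = w u v := by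
      intro g u v huv
      obtain ⟨j, rfl | rfl⟩ := (hadj u v).1 huv
      · rw [← hw j g u, mul_left_comm]
      · rw [h.graph.symm u, h.graph.symm (g * u)]
        have := hw j g ((a j)⁻¹ * u)
        rwa [mul_inv_cancel_left, mul_left_comm (a j) g, mul_inv_cancel_left] at this
    by_cases huv : Adj w u v
    · exact hle g u v huv
    by_cases hguv : Adj w (g * u) (g * v)
    · have := hle g⁻¹ _ _ hguv
      rw [inv_mul_cancel_left, inv_mul_cancel_left] at this
      exact this.symm
    · rw [le_antisymm (not_lt.1 huv) (h.graph.nonneg u v),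
        le_antisymm (not_lt.1 hguv) (h.graph.nonneg _ _)]
  obtain ⟨j, rfl | rfl⟩ := (hadj x y).1 hxy
  · exact ⟨Equiv.mulLeft (a j), rfl, hw' _, fun u => hpar j u x⟩
  · exact ⟨Equiv.mulLeft (a j)⁻¹, rfl, hw' _, fun u => by
      rw [hback, Equiv.coe_mulLeft, hback]; exact hpar j u x⟩

variable [DecidableEq V]

lemma IsTranslation.idle (h : Standing w μ d) (hμ : ∀ x y, μ x = μ y) {x y : V}
    {σ : Equiv.Perm V} (hσ : IsTranslation w d x y σ) (ε : ℝ) (u : V) :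
    idleMeasure w μ ε y (σ u) = idleMeasure w μ ε x u := by
  rw [h.idle_eq, h.idle_eq, ← hσ.map, hσ.weight, hμ (σ x) x]
  simp only [EmbeddingLike.apply_eq_iff_eq]

/-- Moving the mass at each `u` to `σ u` is a coupling of `m_x^ε` and `m_y^ε` of cost `d x y`. -/
lemma IsTranslation.coupling (h : Standing w μ d) (hμ : ∀ x y, μ x = μ y) {x y : V}
    {σ : Equiv.Perm V} (hσ : IsTranslation w d x y σ) {ε : ℝ} (h0 : 0 ≤ ε) (h1 : ε ≤ 1) :
    ∃ ρ : V → V → ℝ, (∀ x y, 0 ≤ ρ x y ∧ ρ x y ≤ 1) ∧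
      (∀ u, ∑ v, ρ u v = idleMeasure w μ ε x u) ∧ (∀ v, ∑ u, ρ u v = idleMeasure w μ ε y v) ∧
      d x y = ∑ u, ∑ v, ρ u v * d u v := by
  have hle : ∀ u, idleMeasure w μ ε x u ≤ 1 := fun u => h.sum_idle ε x ▸
    Finset.single_le_sum (fun u _ => h.idle_nonneg h0 h1 x u) (Finset.mem_univ u)
  refine ⟨fun u v => if v = σ u then idleMeasure w μ ε x u else 0, fun u v => ?_, fun u => ?_,
    fun v => ?_, ?_⟩
  · dsimp only
    split_ifs
    · exact ⟨h.idle_nonneg h0 h1 x u, hle u⟩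
    · exact ⟨le_rfl, zero_le_one⟩
  · simp
  · obtain ⟨v, rfl⟩ := σ.surjective v
    simp [hσ.idle h hμ]
  · simp only [ite_mul, zero_mul, Finset.sum_ite_eq', Finset.mem_univ, if_true, hσ.dist]
    rw [← Finset.sum_mul, h.sum_idle, one_mul]

lemma IsTranslation.plan (h : Standing w μ d) (hμ : ∀ x y, μ x = μ y) {x y : V}
    {σ : Equiv.Perm V} (hσ : IsTranslation w d x y σ) : ∃ ρ, IsPlan w μ d x y ρ := by
  obtain ⟨ρ, hρ, hl, hr, hc⟩ := hσ.coupling h hμ zero_le_one le_rfl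
  refine ⟨ρ, fun u v => (hρ u v).1, fun u => ?_, fun v => ?_, hc.ge⟩
  · rw [hl, h.idle_eq]; simp
  · rw [hr, h.idle_eq]; simp

/-- The harmonic form which is tight on an edge provides a Kantorovich potential for the lazy
walks at its endpoints, so that `W(m_x^ε, m_y^ε) ≥ d(x,y)`. -/
lemma le_cost {α : V → V → ℝ} (h : Standing w μ d) (hα : α ∈ H1set w μ d)
    (hle : ∀ u v, Adj w u v → α u v ≤ d u v) {x y : V} (hxy : Adj w x y) (hmax : α x y = d x y)
    {ε : ℝ} {ρ : V → V → ℝ} (hρ : ∀ u v, 0 ≤ ρ u v)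
    (hl : ∀ u, ∑ v, ρ u v = idleMeasure w μ ε x u)
    (hr : ∀ v, ∑ u, ρ u v = idleMeasure w μ ε y v) :
    d x y ≤ ∑ u, ∑ v, ρ u v * d u v := by
  have hsupp : ∀ z u, idleMeasure w μ ε z u ≠ 0 → u = z ∨ Adj w z u := by
    intro z u hu
    by_contra hno
    push Not at hno
    apply hu
    rw [h.idle_eq, if_neg hno.1, le_antisymm (not_lt.1 hno.2) (h.graph.nonneg z u)]
    simp
  have hzero : ∀ z, ∑ u, idleMeasure w μ ε z u * α z u = 0 := by
    intro z
    rw [h.sum_idle_mul, H1.self hα, hα.2.2.2 z, mul_zero, mul_zero, add_zero]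
  have e : ∑ u, ∑ v, ρ u v * (α u x + d x y + α y v) = d x y := by
    have e1 : ∑ u, ∑ v, ρ u v * α u x = 0 := by
      simp_rw [← Finset.sum_mul, hl, H1.antisymm hα _ x, mul_neg, Finset.sum_neg_distrib]
      rw [hzero x, neg_zero]
    have e2 : ∑ u, ∑ v, ρ u v * d x y = d x y := by
      simp_rw [← Finset.sum_mul, hl]
      rw [h.sum_idle, one_mul]
    have e3 : ∑ u, ∑ v, ρ u v * α y v = 0 := by
      rw [Finset.sum_comm]
      simp_rw [← Finset.sum_mul, hr]
      exact hzero y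
    simp_rw [mul_add, Finset.sum_add_distrib]
    rw [e1, e2, e3]
    ring
  rw [← e]
  refine Finset.sum_le_sum fun u _ => Finset.sum_le_sum fun v _ => ?_
  rcases (hρ u v).eq_or_lt with h0 | h0
  · rw [← h0, zero_mul, zero_mul]
  refine mul_le_mul_of_nonneg_left ?_ h0.le
  have hu : idleMeasure w μ ε x u ≠ 0 := by
    rw [← hl]
    exact (h0.trans_le (Finset.single_le_sum (fun v _ => hρ u v) (Finset.mem_univ v))).ne'
  have hv : idleMeasure w μ ε y v ≠ 0 := by
    rw [← hr]
    exact (h0.trans_le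
      (Finset.single_le_sum (f := fun u => ρ u v) (fun u _ => hρ u v) (Finset.mem_univ u))).ne'
  rw [← hmax]
  rcases hsupp x u hu with rfl | hu' <;> rcases hsupp y v hv with rfl | hv'
  · rw [H1.self hα, H1.self hα, zero_add, add_zero]
    exact hmax.le
  · rw [H1.self hα, zero_add]
    exact (geoSum_two h hα hxy hv').le h hle
  · rw [H1.self hα, add_zero]
    exact (geoSum_two h hα (h.adj_symm hu') hxy).le h hle
  · exact (geoSum_three h hα (h.adj_symm hu') hxy hv').le h hle

lemma deg_le_of_torus [CommGroup V] {m : ℕ} {a : Fin m → V}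
    (ht : IsFlatTorus a w μ d) (x : V) : deg w x ≤ 2 * betti1 w μ d := by
  classical
  obtain ⟨-, -, -, hadj, -, -, -, hb⟩ := ht
  rw [← card_filter_adj, hb]
  have hsub : Finset.univ.filter (Adj w x) ⊆ Finset.univ.image (fun i => a i * x) ∪
      Finset.univ.image (fun i => (a i)⁻¹ * x) := by
    intro y hy
    simp only [Finset.mem_filter, Finset.mem_univ, true_and, hadj] at hy
    obtain ⟨i, rfl | rfl⟩ := hy <;> simp
  refine (Finset.card_le_card hsub).trans ((Finset.card_union_le _ _).trans ?_)
  have h1 := Finset.card_image_le (s := Finset.univ) (f := fun i => a i * x)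
  have h2 := Finset.card_image_le (s := Finset.univ) (f := fun i => (a i)⁻¹ * x)
  rw [Finset.card_univ, Fintype.card_fin] at h1 h2
  omega

omit [DecidableEq V] in
lemma Coords.two_mul_le_deg {m : ℕ} {T : Fin m → Equiv.Perm V} {A : (Fin m → ℝ) → V → V → ℝ}
    (hc : Coords w μ d T A) (x : V) : 2 * m ≤ deg w x := by
  have hinj : Function.Injective (Sum.elim
      (fun i => (⟨T i x, (hc.adj _ _).2 ⟨i, Or.inl rfl⟩⟩ : {y // Adj w x y}))
      (fun i => ⟨(T i).symm x, (hc.adj _ _).2 ⟨i, Or.inr rfl⟩⟩)) := by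
    rintro (i | i) (j | j) hij
    · by_contra hne
      exact hc.ne i j x (fun h => hne (by rw [h])) (congrArg Subtype.val hij)
    · exact absurd (congrArg Subtype.val hij) (hc.ne_symm i j x)
    · exact absurd (congrArg Subtype.val hij).symm (hc.ne_symm j i x)
    · by_contra hne
      have hs : (T i).symm x = (T j).symm x := congrArg Subtype.val hij
      refine hc.ne i j ((T i).symm x) (fun h => hne (by rw [h])) ?_
      rw [Equiv.apply_symm_apply, hs, Equiv.apply_symm_apply]
  have := Nat.card_le_card_of_injective _ hinj
  rw [Nat.card_eq_fintype_card, Fintype.card_sum, Fintype.card_fin] at this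
  unfold deg
  omega

/-- A flat torus of constant vertex measure with parallel edges of equal length is
Ollivier-Betti sharp and bone-idle: translations give optimal couplings. -/
theorem sharp_of_torus [Nonempty V] (h : Standing w μ d) [CommGroup V] {m : ℕ} {a : Fin m → V}
    (ht : IsFlatTorus a w μ d) (hμ : ∀ x y, μ x = μ y) (hpar : ParallelEdgesSameLength a d) :
    (NonnegCurv w μ d ∧ 2 * betti1 w μ d = degMax w) ∧ BoneIdle w μ d := by
  have hplan : ∀ x y, Adj w x y → ∃ ρ, IsPlan w μ d x y ρ := fun x y hxy => by
    obtain ⟨σ, hσ⟩ := torus_translation h ht hμ hpar hxy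
    exact hσ.plan h hμ
  obtain ⟨T, A, hc⟩ := exists_coords h hplan (deg_le_of_torus ht)
  refine ⟨⟨fun x y hxy => ?_, ?_⟩, h.stoch, fun ε h0 h1 x y hxy => ?_⟩
  · obtain ⟨ρ, hρ⟩ := hplan x y hxy
    exact kappa_nonneg_of_plan h hxy hρ
  · have hdeg : ∀ x, deg w x = 2 * betti1 w μ d := fun x =>
      le_antisymm (deg_le_of_torus ht x) (hc.two_mul_le_deg x)
    unfold degMax
    simp only [hdeg, ciSup_const]
  · obtain ⟨σ, hσ⟩ := torus_translation h ht hμ hpar hxy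
    have hd := h.d_pos (h.adj_ne hxy)
    obtain ⟨i, η, rfl⟩ := hc.adj'.1 hxy
    have hleast : IsLeast { s : ℝ | ∃ ρ : V → V → ℝ, (∀ x y, 0 ≤ ρ x y ∧ ρ x y ≤ 1) ∧
        (∀ u, ∑ v, ρ u v = idleMeasure w μ ε x u) ∧
        (∀ v, ∑ u, ρ u v = idleMeasure w μ ε ((T i ^ (η : ℤ)) x) v) ∧
        s = ∑ u, ∑ v, ρ u v * d u v } (d x ((T i ^ (η : ℤ)) x)) := by
      refine ⟨hσ.coupling h hμ h0 h1, ?_⟩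
      rintro s ⟨ρ, hρ, hl, hr, rfl⟩
      exact le_cost h (hc.mem _) (hc.le h (Coords.single_le i η)) hxy (hc.single_tight h i η x)
        (fun u v => (hρ u v).1) hl hr
    have hW : Wasserstein d (idleMeasure w μ ε x) (idleMeasure w μ ε ((T i ^ (η : ℤ)) x)) =
        d x ((T i ^ (η : ℤ)) x) := hleast.csInf_eq
    rw [kappaIdle, hW, div_self hd.ne', sub_self]

end FlatTorus
end Paper

open Paper in
/-- **Theorem (characterization of bone-idle Ollivier-Betti sharp graphs).**
Let `G = (V, w, μ)` be a finite connected weighted graph with a general path distance `d`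
satisfying `∑_{y ∼ x} w(x,y) = μ(x)` for all `x`. The following are equivalent:
(i) `G` is Ollivier-Betti sharp and bone-idle;
(ii) `G` is Ollivier-Betti sharp and `κ₁(x,y) ≥ 0` for every edge;
(iii) `G` is a weighted flat torus with constant vertex measure in which parallel edges have
the same length. -/
theorem ollivierBettiSharp_boneIdle_characterization
    {V : Type*} [instF : Fintype V] [DecidableEq V] [Nonempty V]
    (w : V → V → ℝ) (μ : V → ℝ) (d : V → V → ℝ)
    (hG : IsWeightedGraph w μ) (hconn : GraphConnected w) (hd : IsPathDistance w d)
    (hstoch : ∀ x, ∑ y, w x y = μ x) :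
    (((NonnegCurv w μ d ∧ 2 * betti1 w μ d = degMax w) ∧ BoneIdle w μ d) ↔
      ((NonnegCurv w μ d ∧ 2 * betti1 w μ d = degMax w) ∧
        ∀ x y, Adj w x y → 0 ≤ kappaIdle w μ d 1 x y)) ∧
    (((NonnegCurv w μ d ∧ 2 * betti1 w μ d = degMax w) ∧ BoneIdle w μ d) ↔
      (∃ (instC : CommGroup V) (m : ℕ) (a : Fin m → V),
        @IsFlatTorus V instF instC m a w μ d ∧
        (∀ x y : V, μ x = μ y) ∧
        @ParallelEdgesSameLength V instC m a d)) := by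
  have h : Standing w μ d := ⟨hG, hconn, hd, hstoch⟩
  have h12 : (NonnegCurv w μ d ∧ 2 * betti1 w μ d = degMax w) ∧ BoneIdle w μ d →
      (NonnegCurv w μ d ∧ 2 * betti1 w μ d = degMax w) ∧
        ∀ x y, Adj w x y → 0 ≤ kappaIdle w μ d 1 x y := fun ⟨hs, hb⟩ =>
    ⟨hs, fun x y hxy => (hb.2 1 zero_le_one le_rfl x y hxy).ge⟩
  have h23 : (NonnegCurv w μ d ∧ 2 * betti1 w μ d = degMax w) ∧
        (∀ x y, Adj w x y → 0 ≤ kappaIdle w μ d 1 x y) →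
      ∃ (instC : CommGroup V) (m : ℕ) (a : Fin m → V),
        @IsFlatTorus V instF instC m a w μ d ∧ (∀ x y : V, μ x = μ y) ∧
        @ParallelEdgesSameLength V instC m a d := fun ⟨hs, hk⟩ =>
    exists_flatTorus h (fun x y hxy => exists_plan h hxy (hk x y hxy)) fun x => by
      rw [hs.2]
      exact le_ciSup (f := fun x => deg w x) (Set.finite_range _).bddAbove x
  have h31 : (∃ (instC : CommGroup V) (m : ℕ) (a : Fin m → V),
        @IsFlatTorus V instF instC m a w μ d ∧ (∀ x y : V, μ x = μ y) ∧
        @ParallelEdgesSameLength V instC m a d) →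
      (NonnegCurv w μ d ∧ 2 * betti1 w μ d = degMax w) ∧ BoneIdle w μ d :=
    fun ⟨_, _, _, ht, hμ, hpar⟩ => sharp_of_torus h ht hμ hpar
  exact ⟨⟨h12, fun h2 => h31 (h23 h2)⟩, ⟨fun h1 => h23 (h12 h1), h31⟩⟩
end

section
/- Let G=(V,w,μ,d) be a finite connected weighted graph with a general path distance and let W⊆V be a non-empty set such that κ(x,y)≥0 whenever x∼y and x,y∈V∖W. Then β₁(M₂(G)) ≤ |E(W,V)|, where E(W,V)={edges x∼y with x∈W or y∈W} is the set of edges with at least one endpoint in W. -/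
/-! A linear map that evaluates a harmonic `1`-form on each edge meeting `W` has target of
dimension `|E(W,V)|`, so it is enough that a harmonic form `α` vanishing on these edges vanishes
(`eq_zero_of_vanish`). Otherwise scale `α` so that the maximum of `|α| / d` is `1`, and call a
directed edge maximal if `α = d` on it. Maximal edges avoid `W`, so `κ ≥ 0` on them.

Local potentials. Because `α` sums to zero along the cycles of `X₂`, near a maximal edge `x → y` it
has a potential `f` on the union of the unit balls around `x` and `y`; this `f` is `1`-Lipschitz
there, and `f v - f u = d u v` only if a walk of maximal edges of that length joins `u` to `v`
(`exists_potential`, which rests on `good_two` and `good_three`). Co-closedness says `Δf = 0` at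
`x` and `y`. If `g x = g y` and `g` does not increase along such tight pairs, `f + ε g` extends to
a function admissible in the definition of `κ x y`, and `κ x y ≥ 0` gives `Δg x ≥ Δg y`
(`lap_le`).

Bounded walks. Applying `lap_le` to minus the indicator of the points tight above `z` shows that a
walk of maximal edges can be shifted to any neighbour of its start, at bounded cost in length
(`shift_walk`). If walks of maximal edges of unbounded length existed, they would thus start
everywhere, but none leaves a vertex of `W`. Hence `R x`, the supremum of the lengths of walks of
maximal edges from `x`, is finite.

Conclusion. If `R x > 0` there is a maximal edge `x → y` with `R x = d x y + R y`, and `g = f + R`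
is admissible in `lap_le`, so `ΔR x ≥ ΔR y`. Descending along such edges ends where `R = 0` is
minimal, where `ΔR ≥ 0`. So `R` is subharmonic, therefore constant by the maximum principle
(`eq_of_lap_nonneg`), whereas it drops by at least `d x y` along a maximal edge `x → y`. -/

open Finset

namespace Paper

/-! ### Walks and the path distance -/

/-- `WalkLen r d x y L`: there is a walk from `x` to `y` all of whose steps satisfy `r` and whose
`d`-length is `L`. -/
inductive WalkLen (r : V → V → Prop) (d : V → V → ℝ) : V → V → ℝ → Prop
  | nil (x : V) : WalkLen r d x x 0
  | cons {x y z : V} {L : ℝ} (h : r x y) (p : WalkLen r d y z L) : WalkLen r d x z (d x y + L)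

theorem WalkLen.trans {r : V → V → Prop} {d : V → V → ℝ} {x y z : V} {L M : ℝ}
    (p : WalkLen r d x y L) (q : WalkLen r d y z M) : WalkLen r d x z (L + M) := by
  induction p with
  | nil x => simpa using q
  | cons h _ ih => rw [add_assoc]; exact .cons h (ih q)

theorem WalkLen.single {r : V → V → Prop} {d : V → V → ℝ} {x y : V} (h : r x y) :
    WalkLen r d x y (d x y) := by
  simpa using WalkLen.cons h (.nil y)

theorem WalkLen.exists_fin {r : V → V → Prop} {d : V → V → ℝ} {x y : V} {L : ℝ}
    (p : WalkLen r d x y L) : ∃ (n : ℕ) (c : Fin (n + 1) → V), c 0 = x ∧ c (Fin.last n) = y ∧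
      (∀ i : Fin n, r (c i.castSucc) (c i.succ)) ∧
      L = ∑ i : Fin n, d (c i.castSucc) (c i.succ) := by
  induction p with
  | nil x => exact ⟨0, fun _ => x, rfl, rfl, fun i => i.elim0, by simp⟩
  | @cons x y z L h _ ih =>
    obtain ⟨n, c, h0, hl, hr, hL⟩ := ih
    refine ⟨n + 1, Fin.cons x c, rfl, ?_, ?_, ?_⟩
    · rw [← Fin.succ_last, Fin.cons_succ, hl]
    · intro i
      refine Fin.cases ?_ (fun j => ?_) i
      · simpa [h0] using h
      · rw [← Fin.succ_castSucc, Fin.cons_succ, Fin.cons_succ]; exact hr j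
    · rw [Fin.sum_univ_succ, hL]
      simp [h0]

theorem WalkLen.of_fin {r : V → V → Prop} {d : V → V → ℝ} (n : ℕ) (c : Fin (n + 1) → V)
    (hr : ∀ i : Fin n, r (c i.castSucc) (c i.succ)) :
    WalkLen r d (c 0) (c (Fin.last n)) (∑ i : Fin n, d (c i.castSucc) (c i.succ)) := by
  induction n with
  | zero => simpa using WalkLen.nil (r := r) (d := d) (c 0)
  | succ n ih =>
    rw [Fin.sum_univ_succ, ← Fin.succ_last]
    refine .cons (hr 0) ?_
    have := ih (fun i => c i.succ) (fun i => by simpa [← Fin.succ_castSucc] using hr i.succ)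
    simpa [← Fin.succ_castSucc] using this

theorem dist_isGLB {w d : V → V → ℝ} (hd : IsPathDistance w d) (x y : V) :
    IsGLB {L : ℝ | WalkLen (Adj w) d x y L} (d x y) := by
  convert hd.2.2.2 x y using 1
  ext L
  constructor
  · exact fun p => p.exists_fin
  · rintro ⟨n, c, rfl, rfl, hr, rfl⟩
    exact .of_fin n c hr

theorem dist_le_walk {w d : V → V → ℝ} (hd : IsPathDistance w d) {x y : V} {L : ℝ}
    (p : WalkLen (Adj w) d x y L) : d x y ≤ L := (dist_isGLB hd x y).1 p

theorem dist_triangle' {w d : V → V → ℝ} (hd : IsPathDistance w d) (x y z : V) :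
    d x z ≤ d x y + d y z := by
  have h1 : d x z - d x y ≤ d y z := (dist_isGLB hd y z).2 fun M q => by
    have h2 : d x z - M ≤ d x y := (dist_isGLB hd x y).2 fun L p => by
      linarith [dist_le_walk hd (p.trans q)]
    linarith
  linarith

theorem dist_pos' {w d : V → V → ℝ} (hd : IsPathDistance w d) {x y : V} (h : x ≠ y) :
    0 < d x y :=
  lt_of_le_of_ne (hd.2.2.1 x y) fun h0 => h ((hd.2.1 x y).1 h0.symm)

theorem dist_self' {w d : V → V → ℝ} (hd : IsPathDistance w d) (x : V) : d x x = 0 :=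
  (hd.2.1 x x).2 rfl

theorem Adj.symm' {w : V → V → ℝ} {μ : V → ℝ} (hG : IsWeightedGraph w μ) {x y : V}
    (h : Adj w x y) : Adj w y x := by
  unfold Adj; rw [hG.symm]; exact h

theorem Adj.ne' {w : V → V → ℝ} {μ : V → ℝ} (hG : IsWeightedGraph w μ) {x y : V}
    (h : Adj w x y) : x ≠ y := by
  rintro rfl; unfold Adj at h; rw [hG.loopless] at h; exact lt_irrefl _ h

theorem weight_eq_zero {w : V → V → ℝ} {μ : V → ℝ} (hG : IsWeightedGraph w μ) {x y : V}
    (h : ¬Adj w x y) : w x y = 0 := le_antisymm (not_lt.1 h) (hG.nonneg x y)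

/-- A property passing to neighbours that holds somewhere holds everywhere. -/
theorem GraphConnected.forall_of_closed {w : V → V → ℝ} (hconn : GraphConnected w)
    {P : V → Prop} (hP : ∀ x y, Adj w x y → P x → P y) {x₀ : V} (h₀ : P x₀) (x : V) : P x := by
  obtain ⟨n, c, h0, hl, hadj⟩ := hconn x₀ x
  rw [← hl]
  refine Fin.induction (motive := fun i => P (c i)) (h0 ▸ h₀) (fun i hi => hP _ _ (hadj i) hi) _

/-- On a finite graph the infimum defining the path distance is attained, one step at a time. -/
theorem exists_first_step [Fintype V] {w d : V → V → ℝ} (hd : IsPathDistance w d) {v u : V}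
    (h : v ≠ u) : ∃ t, Adj w v t ∧ d v u = d v t + d t u := by
  by_contra! hcon
  have key : ∀ᶠ m in nhdsWithin (d v u) (Set.Ioi (d v u)), ∀ t, Adj w v t → m ≤ d v t + d t u := by
    refine Filter.eventually_all.2 fun t => ?_
    by_cases ht : Adj w v t
    · have : d v u < d v t + d t u := lt_of_le_of_ne (dist_triangle' hd v t u) (hcon t ht)
      filter_upwards [nhdsWithin_le_nhds (eventually_le_nhds this)] with m hm _ using hm
    · simp [ht]
  obtain ⟨m, hm, hlt⟩ := (key.and self_mem_nhdsWithin).exists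
  have : m ≤ d v u := (dist_isGLB hd v u).2 fun L p => by
    cases p with
    | nil => exact absurd rfl h
    | cons ha q => linarith [hm _ ha, dist_le_walk hd q]
  exact absurd this (not_le.2 hlt)

/-- `h 0, …, h k` is a geodesic ending in `u`. -/
def IsGeod (w d : V → V → ℝ) (u : V) (k : ℕ) (h : ℕ → V) : Prop :=
  h k = u ∧ ∀ i < k, Adj w (h i) (h (i + 1)) ∧ d (h i) u = d (h i) (h (i + 1)) + d (h (i + 1)) u

theorem exists_geod [Fintype V] {w : V → V → ℝ} {μ : V → ℝ} {d : V → V → ℝ}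
    (hG : IsWeightedGraph w μ) (hd : IsPathDistance w d) (u v : V) :
    ∃ k h, h 0 = v ∧ IsGeod w d u k h := by
  have wf : WellFounded fun a b : V => d a u < d b u :=
    have : IsTrans V fun a b : V => d a u < d b u := ⟨fun _ _ _ h1 h2 => lt_trans h1 h2⟩
    have : Std.Irrefl fun a b : V => d a u < d b u := ⟨fun _ h => lt_irrefl _ h⟩
    Finite.wellFounded_of_trans_of_irrefl _
  induction v using wf.induction with
  | _ v ih =>
    by_cases hvu : v = u
    · exact ⟨0, fun _ => u, hvu.symm, rfl, fun i hi => absurd hi (Nat.not_lt_zero i)⟩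
    · obtain ⟨t, ht, hdt⟩ := exists_first_step hd hvu
      obtain ⟨k, h, h0, hk, hstep⟩ := ih t (by linarith [dist_pos' hd (ht.ne' hG)])
      refine ⟨k + 1, fun i => Nat.casesOn i v h, rfl, hk, ?_⟩
      rintro (_ | i) hi
      · simpa [h0] using ⟨ht, hdt⟩
      · exact hstep i (by omega)

namespace IsGeod

variable {w : V → V → ℝ} {μ : V → ℝ} {d : V → V → ℝ} {u : V} {k : ℕ} {h : ℕ → V}

theorem tail (hg : IsGeod w d u (k + 1) h) : IsGeod w d u k (fun i => h (i + 1)) :=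
  ⟨hg.1, fun i hi => hg.2 (i + 1) (by omega)⟩

theorem dist_lt (hG : IsWeightedGraph w μ) (hd : IsPathDistance w d) (hg : IsGeod w d u k h)
    {i j : ℕ} (hij : i < j) (hj : j ≤ k) : d (h j) u < d (h i) u := by
  induction j, hij using Nat.le_induction with
  | base =>
    have := hg.2 i (by omega)
    linarith [dist_pos' hd (this.1.ne' hG)]
  | succ j hij ih =>
    have := hg.2 j (by omega)
    linarith [dist_pos' hd (this.1.ne' hG), ih (by omega)]

theorem inj (hG : IsWeightedGraph w μ) (hd : IsPathDistance w d) (hg : IsGeod w d u k h)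
    {i j : ℕ} (hi : i ≤ k) (hj : j ≤ k) (hij : h i = h j) : i = j := by
  rcases lt_trichotomy i j with hlt | heq | hlt
  · exact absurd (hg.dist_lt hG hd hlt hj) (by rw [hij]; exact lt_irrefl _)
  · exact heq
  · exact absurd (hg.dist_lt hG hd hlt hi) (by rw [hij]; exact lt_irrefl _)

theorem dist_add (hd : IsPathDistance w d) (hg : IsGeod w d u k h) {j : ℕ} (hj : j ≤ k) :
    d (h 0) u = d (h 0) (h j) + d (h j) u := by
  refine le_antisymm (dist_triangle' hd _ _ _) ?_
  induction j with
  | zero => simp [dist_self' hd]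
  | succ j ih =>
    have := hg.2 j (by omega)
    linarith [ih (by omega), dist_triangle' hd (h 0) (h j) (h (j + 1))]

theorem sum_dist (hd : IsPathDistance w d) (hg : IsGeod w d u k h) :
    ∑ i ∈ range k, d (h i) (h (i + 1)) = d (h 0) u := by
  induction k generalizing h with
  | zero => rw [show h 0 = u from hg.1]; simp [dist_self' hd]
  | succ k ih =>
    rw [sum_range_succ', ih hg.tail, (hg.2 0 (by omega)).2, add_comm]

end IsGeod

/-! ### Closed forms bounded by the distance -/

/-- A directed edge on which a form bounded by `d` attains its bound. -/
def MaxEdge (w d α : V → V → ℝ) (x y : V) : Prop := Adj w x y ∧ α x y = d x y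

/-- `Good w d α u v s`: the increment `s` of a potential of `α` from `u` to `v` respects the
Lipschitz bound `s ≤ d u v`, and equality forces a walk of maximal edges from `u` to `v`. -/
def Good (w d α : V → V → ℝ) (u v : V) (s : ℝ) : Prop :=
  s ≤ d u v ∧ (s = d u v → WalkLen (MaxEdge w d α) d u v (d u v))

theorem Good.add {w d α : V → V → ℝ} {u v t : V} {s s' : ℝ} (hd : d u v = d u t + d t v)
    (h1 : Good w d α u t s) (h2 : Good w d α t v s') : Good w d α u v (s + s') := by
  refine ⟨by linarith [h1.1, h2.1], fun he => ?_⟩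
  rw [hd]
  exact (h1.2 (by linarith [h1.1, h2.1])).trans (h2.2 (by linarith [h1.1, h2.1]))

section Form

variable [Fintype V]

/-- `α` is a harmonic `1`-form with `|α| ≤ d` on the edges (by antisymmetry the one-sided bound
suffices). -/
structure IsUnitForm (w : V → V → ℝ) (μ : V → ℝ) (d α : V → V → ℝ) : Prop where
  graph : IsWeightedGraph w μ
  dist : IsPathDistance w d
  mem : α ∈ H1set w μ d
  le : ∀ x y, Adj w x y → α x y ≤ d x y

/-- The vanishing of a form on the cycles of `X₂`, for cycles presented as sequences
`q 0, …, q (n + 2), q (n + 3) = q 0`. -/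
theorem sum_cycle_eq_zero {w : V → V → ℝ} {μ : V → ℝ} {d α : V → V → ℝ}
    (hα : α ∈ H1set w μ d) {n : ℕ} (q : ℕ → V) (hq : q (n + 3) = q 0)
    (hinj : ∀ i < n + 3, ∀ j < n + 3, q i = q j → i = j)
    (hadj : ∀ i < n + 3, Adj w (q i) (q (i + 1)))
    (hX : n = 0 ∨ (d (q 0) (q 3) < d (q 0) (q 1) + d (q 1) (q 2) + d (q 2) (q 3) ∧
      ∑ i ∈ range n, d (q (i + 3)) (q (i + 3 + 1)) = d (q 3) (q 0))) :
    ∑ i ∈ range (n + 3), α (q i) (q (i + 1)) = 0 := by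
  have hsucc : ∀ i : ZMod (n + 3), q (i + 1).val = q (i.val + 1) := by
    intro i
    have hi := ZMod.val_lt i
    have h1 : (1 : ZMod (n + 3)).val = 1 := ZMod.val_one'' (by omega)
    rw [ZMod.val_add, h1]
    rcases Nat.lt_or_ge (i.val + 1) (n + 3) with h | h
    · rw [Nat.mod_eq_of_lt h]
    · have : i.val + 1 = n + 3 := by omega
      rw [this, Nat.mod_self, hq]
  have hsum : ∀ F : ℕ → ℝ, ∑ i : ZMod (n + 3), F i.val = ∑ i ∈ range (n + 3), F i :=
    fun F => Fin.sum_univ_eq_sum_range F (n + 3)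
  have h0 : (0 : ZMod (n + 3)).val = 0 := ZMod.val_zero
  have h1 : (1 : ZMod (n + 3)).val = 1 := ZMod.val_one'' (by omega)
  have h2 : (2 : ZMod (n + 3)).val = 2 := by
    have := ZMod.val_natCast_of_lt (n := n + 3) (a := 2) (by omega)
    simpa using this
  have hcyc : IsCycle w fun i : ZMod (n + 3) => q i.val := by
    refine ⟨fun i j hij => ZMod.val_injective _ (hinj _ (ZMod.val_lt i) _ (ZMod.val_lt j) hij), ?_⟩
    intro i
    simp only [hsucc]
    exact hadj _ (ZMod.val_lt i)
  have key := hα.2.2.1 n (fun i => q i.val) hcyc ?_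
  · simp only [hsucc] at key
    rw [← hsum fun i => α (q i) (q (i + 1))]
    exact key
  · rcases hX with hX | ⟨hlt, hgeo⟩
    · exact Or.inl hX
    · rcases Nat.eq_zero_or_pos n with hn | hn
      · exact Or.inl hn
      have h3 : (3 : ZMod (n + 3)).val = 3 := by
        have := ZMod.val_natCast_of_lt (n := n + 3) (a := 3) (by omega)
        simpa using this
      refine Or.inr ⟨by simpa only [h0, h1, h2, h3] using hlt, ?_⟩
      have hne : ∀ i : ZMod (n + 3), (i ≠ 0 ∧ i ≠ 1 ∧ i ≠ 2) ↔
          (i.val ≠ 0 ∧ i.val ≠ 1 ∧ i.val ≠ 2) := by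
        intro i
        have hv := fun b => (ZMod.val_injective (n + 3)).eq_iff (a := i) (b := b)
        have e0 := hv 0
        have e1 := hv 1
        have e2 := hv 2
        rw [h0] at e0; rw [h1] at e1; rw [h2] at e2
        simp only [ne_eq, e0, e1, e2]
      simp only [h0, h3, hsucc, hne]
      rw [sum_filter, hsum fun i => if i ≠ 0 ∧ i ≠ 1 ∧ i ≠ 2 then d (q i) (q (i + 1)) else 0,
        sum_range_succ', sum_range_succ', sum_range_succ']
      simpa using hgeo

namespace IsUnitForm

variable {w : V → V → ℝ} {μ : V → ℝ} {d α : V → V → ℝ}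

theorem anti (h : IsUnitForm w μ d α) (x y : V) : α x y = -α y x := h.mem.1 x y

theorem diag (h : IsUnitForm w μ d α) (x : V) : α x x = 0 := by
  have := h.anti x x
  linarith

theorem good_self (h : IsUnitForm w μ d α) (u : V) : Good w d α u u 0 := by
  rw [Good, dist_self' h.dist]
  exact ⟨le_rfl, fun _ => .nil u⟩

theorem good_edge (h : IsUnitForm w μ d α) {u v : V} (ha : Adj w u v) :
    Good w d α u v (α u v) :=
  ⟨h.le u v ha, fun he => .single ⟨ha, he⟩⟩

/-- The increment along a geodesic, traversed backwards from its end `u` to its start. -/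
theorem good_geod (h : IsUnitForm w μ d α) {u : V} {k : ℕ} {p : ℕ → V}
    (hg : IsGeod w d u k p) :
    Good w d α u (p 0) (∑ i ∈ range k, α (p (i + 1)) (p i)) := by
  induction k generalizing p with
  | zero => rw [show p 0 = u from hg.1]; simpa using h.good_self u
  | succ k ih =>
    rw [sum_range_succ']
    have h0 := hg.2 0 (by omega)
    refine Good.add ?_ (ih hg.tail) (h.good_edge (h0.1.symm' h.graph))
    rw [h.dist.1 u (p 0), h0.2, h.dist.1 u, h.dist.1 (p (0 + 1)) (p 0), add_comm]

/-- Unless `u, a, v` is itself a geodesic, a geodesic from `v` to `u` closes it up to a cycle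
of `X₂`. -/
theorem good_two (h : IsUnitForm w μ d α) {u a v : V} (hua : Adj w u a) (hav : Adj w a v) :
    Good w d α u v (α u a + α a v) := by
  by_cases huv : u = v
  · subst huv
    rw [h.anti u a, neg_add_cancel]
    exact h.good_self u
  rcases (dist_triangle' h.dist u a v).eq_or_lt with heq | hlt
  · exact Good.add heq (h.good_edge hua) (h.good_edge hav)
  obtain ⟨k, p, hp0, hp⟩ := exists_geod h.graph h.dist u v
  have hgood := h.good_geod hp
  rw [hp0] at hgood
  have ha : ∀ j ≤ k, p j ≠ a := by
    rintro j hj rfl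
    have := hp.dist_add h.dist hj
    rw [hp0, h.dist.1 v u, h.dist.1 v, h.dist.1 _ u] at this
    linarith
  obtain ⟨n, rfl⟩ : ∃ n, k = n + 1 := by
    refine Nat.exists_eq_succ_of_ne_zero ?_
    rintro rfl
    exact huv (hp.1.symm.trans hp0)
  have hpinj := fun i j (hi : i ≤ n + 1) (hj : j ≤ n + 1) => hp.inj h.graph h.dist hi hj
  have hpu := hp.1
  let q : ℕ → V := fun i => match i with
    | 0 => u
    | 1 => a
    | j + 2 => p j
  have hsum := sum_cycle_eq_zero h.mem (n := n) q hpu ?_ ?_ ?_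
  · rw [sum_range_succ', sum_range_succ'] at hsum
    simp only [q, hp0] at hsum
    have : ∑ i ∈ range (n + 1), α (p (i + 1)) (p i)
        = - ∑ i ∈ range (n + 1), α (p i) (p (i + 1)) := by
      rw [← sum_neg_distrib]
      exact sum_congr rfl fun i _ => h.anti _ _
    rw [this] at hgood
    convert hgood using 1
    linarith
  · rintro (_ | _ | i) hi (_ | _ | j) hj hij
    · rfl
    · exact absurd hij (hua.ne' h.graph)
    · have := hpinj _ _ (by omega) (by omega) ((show u = p j from hij).symm.trans hpu.symm)
      omega
    · exact absurd hij.symm (hua.ne' h.graph)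
    · rfl
    · exact absurd hij.symm (ha j (by omega))
    · have := hpinj _ _ (by omega) (by omega) ((show p i = u from hij).trans hpu.symm)
      omega
    · exact absurd hij (ha i (by omega))
    · have := hpinj i j (by omega) (by omega) hij
      omega
  · rintro (_ | _ | i) hi
    · exact hua
    · simpa [q, hp0] using hav
    · exact (hp.2 i (by omega)).1
  · rcases Nat.eq_zero_or_pos n with hn | hn
    · exact Or.inl hn
    have h0 := hp.2 0 (by omega)
    rw [hp0] at h0
    refine Or.inr ⟨?_, ?_⟩
    · simp only [q, hp0]
      have e1 := h.dist.1 v u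
      have e2 := h.dist.1 (p (0 + 1)) u
      have := h.dist.2.2.1 v (p (0 + 1))
      simp only [zero_add] at *
      linarith [h0.2]
    · exact hp.tail.sum_dist h.dist

theorem triangle (h : IsUnitForm w μ d α) {u a b : V} (hua : Adj w u a) (hab : Adj w a b)
    (hbu : Adj w b u) : α u a + α a b + α b u = 0 := by
  have h1 := hua.ne' h.graph
  have h2 := hab.ne' h.graph
  have h3 := hbu.ne' h.graph
  let q : ℕ → V := fun i => match i with
    | 0 => u
    | 1 => a
    | 2 => b
    | _ + 3 => u
  have hsum := sum_cycle_eq_zero h.mem (n := 0) q rfl ?_ ?_ (Or.inl rfl)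
  · simpa only [zero_add, sum_range_succ, sum_range_zero, q] using hsum
  · intro i hi j hj hij
    interval_cases i <;> interval_cases j <;> simp_all [q, eq_comm]
  · intro i hi
    interval_cases i
    · exact hua
    · exact hab
    · exact hbu

/-- Unless `u, a, b, v` is itself a geodesic, a geodesic from `v` to `u` either closes it up to a
cycle of `X₂` or passes through one of the inner vertices, which reduces to `good_two`. -/
theorem good_three (h : IsUnitForm w μ d α) {u a b v : V} (hua : Adj w u a) (hab : Adj w a b)
    (hbv : Adj w b v) : Good w d α u v (α u a + α a b + α b v) := by
  by_cases hub : u = b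
  · subst hub
    rw [h.anti u a, neg_add_cancel, zero_add]
    exact h.good_edge hbv
  by_cases hav : a = v
  · subst hav
    rw [h.anti a b, neg_add_cancel_right]
    exact h.good_edge hua
  rcases (dist_triangle' h.dist u a v).eq_or_lt with heq | hlt
  · rw [add_assoc]
    exact Good.add heq (h.good_edge hua) (h.good_two hab hbv)
  rcases (dist_triangle' h.dist u b v).eq_or_lt with heq | hlt'
  · exact Good.add heq (h.good_two hua hab) (h.good_edge hbv)
  obtain ⟨k, p, hp0, hp⟩ := exists_geod h.graph h.dist u v
  have hgood := h.good_geod hp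
  rw [hp0] at hgood
  have ha : ∀ j ≤ k, p j ≠ a := by
    rintro j hj rfl
    have := hp.dist_add h.dist hj
    rw [hp0, h.dist.1 v u, h.dist.1 v, h.dist.1 _ u] at this
    linarith
  have hb : ∀ j ≤ k, p j ≠ b := by
    rintro j hj rfl
    have := hp.dist_add h.dist hj
    rw [hp0, h.dist.1 v u, h.dist.1 v, h.dist.1 _ u] at this
    linarith
  have hpinj := fun i j (hi : i ≤ k) (hj : j ≤ k) => hp.inj h.graph h.dist hi hj
  have hpu := hp.1
  have hne := hab.ne' h.graph
  have hua' := hua.ne' h.graph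
  by_cases huv : u = v
  · subst huv
    rw [h.triangle hua hab hbv]
    exact h.good_self u
  let q : ℕ → V := fun i => match i with
    | 0 => u
    | 1 => a
    | 2 => b
    | j + 3 => p j
  have hsum := sum_cycle_eq_zero h.mem (n := k) q hpu ?_ ?_ ?_
  · rw [sum_range_succ', sum_range_succ', sum_range_succ'] at hsum
    simp only [q, hp0] at hsum
    have : ∑ i ∈ range k, α (p (i + 1)) (p i) = - ∑ i ∈ range k, α (p i) (p (i + 1)) := by
      rw [← sum_neg_distrib]
      exact sum_congr rfl fun i _ => h.anti _ _
    rw [this] at hgood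
    convert hgood using 1
    linarith
  · have hp' : ∀ i, i < k → p i ≠ u := fun i hi he => by
      have := hpinj _ _ hi.le le_rfl (he.trans hpu.symm)
      omega
    rintro (_ | _ | _ | i) hi (_ | _ | _ | j) hj hij
    · rfl
    · exact absurd hij hua'
    · exact absurd hij hub
    · exact absurd hij.symm (hp' j (by omega))
    · exact absurd hij.symm hua'
    · rfl
    · exact absurd hij hne
    · exact absurd hij.symm (ha j (by omega))
    · exact absurd hij.symm hub
    · exact absurd hij.symm hne
    · rfl
    · exact absurd hij.symm (hb j (by omega))
    · exact absurd hij (hp' i (by omega))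
    · exact absurd hij (ha i (by omega))
    · exact absurd hij (hb i (by omega))
    · have := hpinj i j (by omega) (by omega) hij
      omega
  · rintro (_ | _ | _ | i) hi
    · exact hua
    · exact hab
    · simpa [q, hp0] using hbv
    · exact (hp.2 i (by omega)).1
  · refine Or.inr ⟨?_, hp.sum_dist h.dist⟩
    simp only [q, hp0]
    have := dist_triangle' h.dist a b v
    linarith
end IsUnitForm

/-! ### Local potentials at a maximal edge -/

/-- `u` lies in the combinatorial ball of radius one around `x`. -/
def Near (w : V → V → ℝ) (x u : V) : Prop := u = x ∨ Adj w x u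

/-- `f` is a potential of `α` on the union of the unit balls around `x` and `y`, normalised by
`f x = 0`; it is `1`-Lipschitz there, and tight pairs are joined by walks of maximal edges. -/
structure IsPotential (w d α : V → V → ℝ) (x y : V) (f : V → ℝ) : Prop where
  left : ∀ v, Near w x v → f v = α x v
  right : ∀ v, Near w y v → f v = d x y + α y v
  good : ∀ u v, (Near w x u ∨ Near w y u) → (Near w x v ∨ Near w y v) →
    Good w d α u v (f v - f u)

namespace IsUnitForm

variable {w : V → V → ℝ} {μ : V → ℝ} {d α : V → V → ℝ}

theorem near_two (h : IsUnitForm w μ d α) {u a v : V} (hu : Near w a u) (hv : Near w a v) :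
    Good w d α u v (α u a + α a v) := by
  rcases hu with rfl | hu
  · rw [h.diag, zero_add]
    rcases hv with rfl | hv
    · rw [h.diag]; exact h.good_self _
    · exact h.good_edge hv
  · rcases hv with rfl | hv
    · rw [h.diag, add_zero]; exact h.good_edge (hu.symm' h.graph)
    · exact h.good_two (hu.symm' h.graph) hv

theorem near_three (h : IsUnitForm w μ d α) {u a b v : V} (hab : Adj w a b) (hu : Near w a u)
    (hv : Near w b v) : Good w d α u v (α u a + α a b + α b v) := by
  rcases hu with rfl | hu
  · rw [h.diag, zero_add]
    exact h.near_two (Or.inr (hab.symm' h.graph)) hv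
  · rcases hv with rfl | hv
    · rw [h.diag, add_zero]
      exact h.good_two (hu.symm' h.graph) hab
    · exact h.good_three (hu.symm' h.graph) hab hv

theorem exists_potential (h : IsUnitForm w μ d α) {x y : V} (hxy : MaxEdge w d α x y) :
    ∃ f, IsPotential w d α x y f := by
  classical
  have hyx := h.anti y x
  have hx0 := h.diag x
  have hy0 := h.diag y
  have hval := hxy.2
  have hcons : ∀ v, Near w x v → Near w y v → α x v = d x y + α y v := by
    rintro v (rfl | hv) hv'
    · linarith
    · rcases hv' with rfl | hv'
      · linarith
      · have := h.triangle hxy.1 hv' (hv.symm' h.graph)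
        linarith [h.anti v x]
  let f : V → ℝ := fun v => if Near w x v then α x v else d x y + α y v
  have hl : ∀ v, Near w x v → f v = α x v := fun v hv => if_pos hv
  have hr : ∀ v, Near w y v → f v = d x y + α y v := fun v hv => by
    by_cases hv' : Near w x v
    · rw [hl v hv', hcons v hv' hv]
    · exact if_neg hv'
  refine ⟨f, hl, hr, ?_⟩
  rintro u v (hu | hu) (hv | hv)
  · convert h.near_two hu hv using 1
    rw [hl u hu, hl v hv, h.anti u x]; ring
  · convert h.near_three hxy.1 hu hv using 1
    rw [hl u hu, hr v hv, h.anti u x, hval]; ring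
  · convert h.near_three (hxy.1.symm' h.graph) hu hv using 1
    rw [hr u hu, hl v hv, h.anti u y, hyx, hval]; ring
  · convert h.near_two hu hv using 1
    rw [hr u hu, hr v hv, h.anti u y]; ring

end IsUnitForm

theorem bddAbove_grad (w d : V → V → ℝ) (f : V → ℝ) :
    BddAbove {r : ℝ | ∃ x y, Adj w x y ∧ r = |grad d f x y|} := by
  refine ((Set.finite_range fun p : V × V => |grad d f p.1 p.2|).subset ?_).bddAbove
  rintro r ⟨x, y, -, rfl⟩
  exact ⟨(x, y), rfl⟩

theorem abs_sub_le_of_gradNorm {w : V → V → ℝ} {μ : V → ℝ} {d : V → V → ℝ}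
    (hG : IsWeightedGraph w μ) (hd : IsPathDistance w d) {f : V → ℝ}
    (hf : gradNorm w d f = 1) {x y : V} (hxy : Adj w x y) : |f x - f y| ≤ d x y := by
  have hpos := dist_pos' hd (hxy.ne' hG)
  have : |grad d f x y| ≤ 1 := hf ▸ le_csSup (bddAbove_grad w d f) ⟨x, y, hxy, rfl⟩
  rwa [grad, abs_div, abs_of_pos hpos, div_le_one hpos] at this

theorem abs_lap_le {w : V → V → ℝ} {μ : V → ℝ} {d : V → V → ℝ}
    (hG : IsWeightedGraph w μ) (hd : IsPathDistance w d) {f : V → ℝ}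
    (hf : gradNorm w d f = 1) (x : V) : |lap w μ f x| ≤ ∑ y, w x y / μ x * d x y := by
  refine (abs_sum_le_sum_abs _ _).trans (sum_le_sum fun y _ => ?_)
  have h0 : 0 ≤ w x y / μ x := div_nonneg (hG.nonneg x y) (hG.mu_pos x).le
  rw [abs_mul, abs_of_nonneg h0]
  by_cases ha : Adj w x y
  · rw [abs_sub_comm]
    exact mul_le_mul_of_nonneg_left (abs_sub_le_of_gradNorm hG hd hf ha) h0
  · simp [weight_eq_zero hG ha]

/-- The set defining `kappa` is bounded below, so its infimum is not a junk value. -/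
theorem kappa_le {w : V → V → ℝ} {μ : V → ℝ} {d : V → V → ℝ}
    (hG : IsWeightedGraph w μ) (hd : IsPathDistance w d) {x y : V} (hxy : Adj w x y)
    {f : V → ℝ} (h1 : grad d f y x = 1) (h2 : gradNorm w d f = 1) :
    kappa w μ d x y ≤ grad d (lap w μ f) x y := by
  have hpos := dist_pos' hd (hxy.ne' hG)
  refine csInf_le ⟨(-(∑ z, w x z / μ x * d x z) - ∑ z, w y z / μ y * d y z) / d x y, ?_⟩
    ⟨f, h1, h2, rfl⟩
  rintro r ⟨g, -, hg, rfl⟩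
  refine div_le_div_of_nonneg_right ?_ hpos.le
  linarith [(abs_le.1 (abs_lap_le hG hd hg x)).1, (abs_le.1 (abs_lap_le hG hd hg y)).2]

/-- Variation of the local potential. A function `g` that does not increase along tight pairs can
be added to the potential with a small factor without violating the Lipschitz bound; as the
potential is harmonic at `x` and `y`, non-negative curvature compares the Laplacians of `g`. -/
theorem IsUnitForm.lap_le {w : V → V → ℝ} {μ : V → ℝ} {d α : V → V → ℝ}
    (h : IsUnitForm w μ d α) {x y : V} (hxy : MaxEdge w d α x y)
    (hκ : 0 ≤ kappa w μ d x y) {f : V → ℝ} (hf : IsPotential w d α x y f) (g : V → ℝ)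
    (hg : ∀ u v, (Near w x u ∨ Near w y u) → (Near w x v ∨ Near w y v) →
      f v - f u = d u v → g v ≤ g u) (hgxy : g x = g y) :
    lap w μ g y ≤ lap w μ g x := by
  have hG := h.graph
  have hd := h.dist
  have hpos := dist_pos' hd (hxy.1.ne' hG)
  set S : V → Prop := fun u => Near w x u ∨ Near w y u with hS
  have hSx : S x := Or.inl (Or.inl rfl)
  have hSy : S y := Or.inr (Or.inl rfl)
  have hε : ∀ᶠ ε in nhdsWithin (0 : ℝ) (Set.Ioi 0), ∀ u v, S u → S v →
      f v - f u + ε * (g v - g u) ≤ d u v := by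
    refine Filter.eventually_all.2 fun u => Filter.eventually_all.2 fun v => ?_
    by_cases huv : S u ∧ S v
    · rcases (hf.good u v huv.1 huv.2).1.eq_or_lt with he | hlt
      · filter_upwards [self_mem_nhdsWithin] with ε hε _ _
        have hε' : 0 < ε := hε
        nlinarith [hg u v huv.1 huv.2 he]
      · have hc : Filter.Tendsto (fun ε : ℝ => f v - f u + ε * (g v - g u)) (nhds 0)
            (nhds (f v - f u + 0 * (g v - g u))) := Continuous.tendsto (by fun_prop) 0
        rw [zero_mul, add_zero] at hc
        filter_upwards [nhdsWithin_le_nhds (hc.eventually_lt_const hlt)] with ε hε _ _ using hε.le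
    · exact Filter.Eventually.of_forall fun ε h1 h2 => absurd ⟨h1, h2⟩ huv
  obtain ⟨ε, hLip, hεpos⟩ := (hε.and self_mem_nhdsWithin).exists
  have hεpos : 0 < ε := hεpos
  -- the McShane extension of the perturbed potential
  let F : V → ℝ := fun v => ⨅ s : {s // S s}, (f s + ε * g s + d s v)
  have : Nonempty {s // S s} := ⟨⟨x, hSx⟩⟩
  have hbdd : ∀ v, BddBelow (Set.range fun s : {s // S s} => f s + ε * g s + d s v) :=
    fun v => (Set.finite_range _).bddBelow
  have hFS : ∀ v, S v → F v = f v + ε * g v := by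
    intro v hv
    refine le_antisymm ?_ (le_ciInf fun s => ?_)
    · refine (ciInf_le (hbdd v) ⟨v, hv⟩).trans ?_
      simp [dist_self' hd]
    · have := hLip s v s.2 hv
      linarith
  have hFL : ∀ u v, F u - F v ≤ d u v := by
    intro u v
    have : F u - d u v ≤ F v := le_ciInf fun s => by
      have h1 : F u ≤ _ := ciInf_le (hbdd u) s
      have h2 := dist_triangle' hd s v u
      rw [hd.1 v u] at h2
      linarith
    linarith
  have hfx : f x = 0 := by rw [hf.left x (Or.inl rfl), h.diag]
  have hfy : f y = d x y := by rw [hf.right y (Or.inl rfl), h.diag, add_zero]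
  have hgrad : grad d F y x = 1 := by
    rw [grad, hFS x hSx, hFS y hSy, hfx, hfy, hgxy, hd.1 y x]
    field_simp
    ring
  have hnorm : gradNorm w d F = 1 := by
    refine le_antisymm (csSup_le ⟨_, x, y, hxy.1, rfl⟩ ?_) ?_
    · rintro r ⟨u, v, huv, rfl⟩
      have hp := dist_pos' hd (huv.ne' hG)
      rw [grad, abs_div, abs_of_pos hp, div_le_one hp, abs_le]
      have := hFL v u
      rw [hd.1 v u] at this
      exact ⟨by linarith, hFL u v⟩
    · refine le_csSup (bddAbove_grad w d F) ⟨y, x, hxy.1.symm' hG, ?_⟩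
      rw [hgrad, abs_one]
  have hκF := hκ.trans (kappa_le hG hd hxy.1 hgrad hnorm)
  rw [grad, le_div_iff₀ hpos, zero_mul] at hκF
  have hlap : ∀ p, S p → (∀ v, Adj w p v → S v ∧ f v - f p = α p v) →
      lap w μ F p = ε * lap w μ g p := by
    intro p hp hpv
    have h0 := h.mem.2.2.2 p
    have : lap w μ F p = ∑ v, w p v / μ p * α p v + ε * lap w μ g p := by
      rw [lap, lap, mul_sum, ← sum_add_distrib]
      refine sum_congr rfl fun v _ => ?_
      by_cases hv : Adj w p v
      · rw [hFS p hp, hFS v (hpv v hv).1, ← (hpv v hv).2]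
        ring
      · simp [weight_eq_zero hG hv]
    rw [this, h0, zero_add]
  rw [hlap x hSx fun v hv => ⟨Or.inl (Or.inr hv), by rw [hf.left v (Or.inr hv), hfx, sub_zero]⟩,
    hlap y hSy fun v hv => ⟨Or.inr (Or.inr hv), by rw [hf.right v (Or.inr hv), hfy]; ring⟩] at hκF
  nlinarith

/-! ### Walks of maximal edges -/

section MaxWalks

variable {w : V → V → ℝ} {μ : V → ℝ} {d α : V → V → ℝ}

theorem lap_add (f g : V → ℝ) (x : V) :
    lap w μ (fun v => f v + g v) x = lap w μ f x + lap w μ g x := by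
  rw [lap, lap, lap, ← sum_add_distrib]
  exact sum_congr rfl fun v _ => by ring

theorem IsPotential.lap_eq_zero (h : IsUnitForm w μ d α) {x y : V} {f : V → ℝ}
    (hf : IsPotential w d α x y f) : lap w μ f x = 0 ∧ lap w μ f y = 0 := by
  have hfx : f x = 0 := by rw [hf.left x (Or.inl rfl), h.diag]
  have hfy : f y = d x y := by rw [hf.right y (Or.inl rfl), h.diag, add_zero]
  constructor
  · rw [← h.mem.2.2.2 x, lap]
    refine sum_congr rfl fun v _ => ?_
    by_cases hv : Adj w x v
    · rw [hf.left v (Or.inr hv), hfx, sub_zero]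
    · simp [weight_eq_zero h.graph hv]
  · rw [← h.mem.2.2.2 y, lap]
    refine sum_congr rfl fun v _ => ?_
    by_cases hv : Adj w y v
    · rw [hf.right v (Or.inr hv), hfy, add_sub_cancel_left]
    · simp [weight_eq_zero h.graph hv]

/-- Every point near the start of a maximal edge is tight with some point near its end. Otherwise
lowering the potential on all points tight above `z` would change the Laplacian at `x` only. -/
theorem IsUnitForm.exists_near_walk (h : IsUnitForm w μ d α) {x y : V}
    (hxy : MaxEdge w d α x y) (hκ : 0 ≤ kappa w μ d x y) {z : V} (hz : Near w x z) :
    ∃ z', Near w y z' ∧ WalkLen (MaxEdge w d α) d z z' (α z x + d x y + α y z') := by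
  classical
  obtain ⟨f, hf⟩ := h.exists_potential hxy
  by_contra! hcon
  have hU : ∀ v, Near w y v → f v - f z ≠ d z v := by
    intro v hv he
    refine hcon v hv ?_
    have := (hf.good z v (Or.inl hz) (Or.inr hv)).2 he
    rw [← he, hf.right v hv, hf.left z hz, h.anti x z] at this
    convert this using 1
    ring
  have hzx : Adj w x z := by
    rcases hz with rfl | hz
    · refine absurd ?_ (hU y (Or.inl rfl))
      rw [hf.right y (Or.inl rfl), hf.left z (Or.inl rfl), h.diag, h.diag]
      ring
    · exact hz
  let g : V → ℝ := fun v => if (Near w x v ∨ Near w y v) ∧ f v - f z = d z v then -1 else 0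
  have hgy : ∀ v, Near w y v → g v = 0 := fun v hv => if_neg fun hc => hU v hv hc.2
  have hgx : g x = 0 := hgy x (Or.inr (hxy.1.symm' h.graph))
  have hgz : g z = -1 := if_pos ⟨Or.inl hz, by rw [sub_self, dist_self' h.dist]⟩
  have hg0 : ∀ v, g v ≤ 0 := fun v => by
    simp only [g]; split_ifs <;> norm_num
  have key := h.lap_le hxy hκ hf g ?_ (hgx.trans (hgy y (Or.inl rfl)).symm)
  · have hy : lap w μ g y = 0 := sum_eq_zero fun v _ => by
      by_cases hv : Adj w y v
      · rw [hgy v (Or.inr hv), hgy y (Or.inl rfl), sub_zero, mul_zero]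
      · simp [weight_eq_zero h.graph hv]
    have hx : lap w μ g x < 0 := by
      refine sum_neg' (fun v _ => ?_) ⟨z, mem_univ _, ?_⟩
      · rw [hgx, sub_zero]
        exact mul_nonpos_of_nonneg_of_nonpos
          (div_nonneg (h.graph.nonneg x v) (h.graph.mu_pos x).le) (hg0 v)
      · have : 0 < w x z / μ x := div_pos hzx (h.graph.mu_pos x)
        rw [hgx, hgz]
        linarith
    linarith
  · intro u v hu hv huv
    by_cases hzu : f u - f z = d z u
    · have : g v = -1 := if_pos ⟨hv, le_antisymm (hf.good z v (Or.inl hz) hv).1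
        (by linarith [dist_triangle' h.dist z u v])⟩
      rw [this]
      simp only [g]; split_ifs <;> norm_num
    · have : g u = 0 := if_neg fun hc => hzu hc.2
      rw [this]; exact hg0 v

/-- A walk of maximal edges can be shifted to start at any point near its start. -/
theorem IsUnitForm.shift_walk (h : IsUnitForm w μ d α)
    (hκ : ∀ x y, MaxEdge w d α x y → 0 ≤ kappa w μ d x y) {x y : V} {L : ℝ}
    (p : WalkLen (MaxEdge w d α) d x y L) :
    ∀ z, Near w x z → ∃ z', Near w y z' ∧
      WalkLen (MaxEdge w d α) d z z' (L + α z x + α y z') := by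
  induction p with
  | nil x =>
    intro z hz
    refine ⟨z, hz, ?_⟩
    rw [h.anti x z, zero_add, add_neg_cancel]
    exact .nil z
  | @cons x x₁ y L hs _ ih =>
    intro z hz
    obtain ⟨z₁, hz₁, p₁⟩ := h.exists_near_walk hs (hκ _ _ hs) hz
    obtain ⟨z', hz', p'⟩ := ih z₁ hz₁
    refine ⟨z', hz', ?_⟩
    have := p₁.trans p'
    rw [h.anti x₁ z₁] at this
    convert this using 1
    ring

/-- Lengths of walks of maximal edges starting at `x`. -/
def maxLengths (w d α : V → V → ℝ) (x : V) : Set ℝ :=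
  {L | ∃ y, WalkLen (MaxEdge w d α) d x y L}

/-- The supremum `R x` of the lengths of walks of maximal edges starting at `x`. -/
noncomputable def maxLength (w d α : V → V → ℝ) (x : V) : ℝ := sSup (maxLengths w d α x)

theorem zero_mem_maxLengths (x : V) : 0 ∈ maxLengths w d α x := ⟨x, .nil x⟩

/-- If no maximal edge starts at some vertex, then walks of maximal edges have bounded length:
unbounded walks could be shifted to every vertex. -/
theorem IsUnitForm.bddAbove_maxLengths (h : IsUnitForm w μ d α) (hconn : GraphConnected w)
    (hκ : ∀ x y, MaxEdge w d α x y → 0 ≤ kappa w μ d x y) {x₀ : V}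
    (h₀ : ∀ y, ¬MaxEdge w d α x₀ y) (x : V) : BddAbove (maxLengths w d α x) := by
  refine hconn.forall_of_closed (P := fun x => BddAbove (maxLengths w d α x)) ?_ (x₀ := x₀) ?_ x
  · rintro z x hzx ⟨B, hB⟩
    obtain ⟨C, hC⟩ := (Set.finite_range fun p : V × V => |α p.1 p.2|).bddAbove
    have hC' : ∀ u v, -C ≤ α u v := fun u v => (abs_le.1 (hC ⟨(u, v), rfl⟩)).1
    refine ⟨B + C + C, ?_⟩
    rintro L ⟨y, p⟩
    obtain ⟨z', -, p'⟩ := h.shift_walk hκ p z (Or.inr (hzx.symm' h.graph))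
    linarith [hB ⟨z', p'⟩, hC' z x, hC' y z']
  · refine ⟨0, ?_⟩
    rintro L ⟨y, p⟩
    cases p with
    | nil => exact le_rfl
    | cons hs _ => exact absurd hs (h₀ _)

theorem add_maxLength_le (hb : ∀ x, BddAbove (maxLengths w d α x)) {u v : V} {L : ℝ}
    (p : WalkLen (MaxEdge w d α) d u v L) : L + maxLength w d α v ≤ maxLength w d α u := by
  have : maxLength w d α v ≤ maxLength w d α u - L := by
    refine csSup_le ⟨0, zero_mem_maxLengths v⟩ ?_
    rintro M ⟨y, q⟩
    have : L + M ≤ maxLength w d α u := le_csSup (hb u) ⟨y, p.trans q⟩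
    linarith
  linarith

theorem maxLength_nonneg (hb : ∀ x, BddAbove (maxLengths w d α x)) (x : V) :
    0 ≤ maxLength w d α x := le_csSup (hb x) (zero_mem_maxLengths x)

/-- The dynamic programming equation for `maxLength`. -/
theorem exists_maxEdge_eq (hd : IsPathDistance w d)
    (hb : ∀ x, BddAbove (maxLengths w d α x)) {x : V} (hx : 0 < maxLength w d α x) :
    ∃ y, MaxEdge w d α x y ∧ maxLength w d α x = d x y + maxLength w d α y := by
  classical
  have hne : (univ.filter fun y => MaxEdge w d α x y).Nonempty := by
    by_contra hemp
    rw [not_nonempty_iff_eq_empty, filter_eq_empty_iff] at hemp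
    refine absurd hx (not_lt.2 (csSup_le ⟨0, zero_mem_maxLengths x⟩ ?_))
    rintro L ⟨y, p⟩
    cases p with
    | nil => exact le_rfl
    | cons hs _ => exact absurd hs (hemp (mem_univ _))
  obtain ⟨y, hy, hmax⟩ := exists_max_image _ (fun y => d x y + maxLength w d α y) hne
  have hxy := (mem_filter.1 hy).2
  have hge := add_maxLength_le hb (.single hxy)
  refine ⟨y, hxy, le_antisymm (csSup_le ⟨0, zero_mem_maxLengths x⟩ ?_) hge⟩
  rintro L ⟨z, p⟩
  cases p with
  | nil => exact add_nonneg (hd.2.2.1 x y) (maxLength_nonneg hb y)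
  | @cons _ t _ M hs q =>
    have h1 := hmax t (mem_filter.2 ⟨mem_univ _, hs⟩)
    have h2 : M ≤ maxLength w d α t := le_csSup (hb t) ⟨z, q⟩
    linarith

/-- `maxLength` is subharmonic. Along a maximal edge realising the dynamic programming equation,
the sum of the local potential and `maxLength` is an admissible variation, so the Laplacian of
`maxLength` does not increase; following such edges one arrives at a minimum of `maxLength`. -/
theorem IsUnitForm.lap_maxLength_nonneg (h : IsUnitForm w μ d α)
    (hκ : ∀ x y, MaxEdge w d α x y → 0 ≤ kappa w μ d x y)
    (hb : ∀ x, BddAbove (maxLengths w d α x)) (x : V) : 0 ≤ lap w μ (maxLength w d α) x := by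
  have wf : WellFounded fun a b : V => maxLength w d α a < maxLength w d α b :=
    have : IsTrans V fun a b : V => maxLength w d α a < maxLength w d α b :=
      ⟨fun _ _ _ h1 h2 => lt_trans h1 h2⟩
    have : Std.Irrefl fun a b : V => maxLength w d α a < maxLength w d α b :=
      ⟨fun _ h => lt_irrefl _ h⟩
    Finite.wellFounded_of_trans_of_irrefl _
  induction x using wf.induction with
  | _ x ih =>
    rcases (maxLength_nonneg hb x).eq_or_lt with h0 | hpos
    · refine sum_nonneg fun v _ => ?_
      rw [← h0, sub_zero]
      exact mul_nonneg (div_nonneg (h.graph.nonneg x v) (h.graph.mu_pos x).le)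
        (maxLength_nonneg hb v)
    · obtain ⟨y, hxy, hR⟩ := exists_maxEdge_eq h.dist hb hpos
      have hdpos := dist_pos' h.dist (hxy.1.ne' h.graph)
      refine (ih y (by linarith)).trans ?_
      obtain ⟨f, hf⟩ := h.exists_potential hxy
      have key := h.lap_le hxy (hκ _ _ hxy) hf (fun v => f v + maxLength w d α v) ?_ ?_
      · rwa [lap_add, lap_add, (hf.lap_eq_zero h).1, (hf.lap_eq_zero h).2, zero_add,
          zero_add] at key
      · intro u v hu hv huv
        have := add_maxLength_le hb ((hf.good u v hu hv).2 huv)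
        linarith
      · rw [hf.left x (Or.inl rfl), hf.right y (Or.inl rfl), h.diag, h.diag, hR]
        ring

/-- The maximum principle. -/
theorem eq_of_lap_nonneg (hG : IsWeightedGraph w μ) (hconn : GraphConnected w) {f : V → ℝ}
    (hf : ∀ x, 0 ≤ lap w μ f x) (x y : V) : f x = f y := by
  have : Nonempty V := ⟨x⟩
  obtain ⟨m, hm⟩ := Finite.exists_max f
  suffices hall : ∀ x, f x = f m by rw [hall x, hall y]
  refine hconn.forall_of_closed ?_ (x₀ := m) rfl
  intro u v huv hu
  have hterm : ∀ z ∈ univ, w u z / μ u * (f z - f u) ≤ 0 := fun z _ =>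
    mul_nonpos_of_nonneg_of_nonpos (div_nonneg (hG.nonneg u z) (hG.mu_pos u).le)
      (by linarith [hm z])
  have h0 := (sum_eq_zero_iff_of_nonpos hterm).1 (le_antisymm (sum_nonpos hterm) (hf u)) v
    (mem_univ v)
  have hpos : w u v / μ u ≠ 0 := (div_pos huv (hG.mu_pos u)).ne'
  have := (mul_eq_zero.1 h0).resolve_left hpos
  linarith

theorem IsUnitForm.not_maxEdge (h : IsUnitForm w μ d α) (hconn : GraphConnected w)
    (hκ : ∀ x y, MaxEdge w d α x y → 0 ≤ kappa w μ d x y) {x₀ : V}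
    (h₀ : ∀ y, ¬MaxEdge w d α x₀ y) (x y : V) : ¬MaxEdge w d α x y := by
  intro hxy
  have hb := h.bddAbove_maxLengths hconn hκ h₀
  have hconst := eq_of_lap_nonneg h.graph hconn (h.lap_maxLength_nonneg hκ hb)
  have h1 := add_maxLength_le hb (.single hxy)
  linarith [hconst x y, dist_pos' h.dist (hxy.1.ne' h.graph)]

end MaxWalks

/-! ### The dimension estimate -/

/-- The linear space of harmonic `1`-forms. -/
def H1 (w : V → V → ℝ) (μ : V → ℝ) (d : V → V → ℝ) : Submodule ℝ (V → V → ℝ) where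
  carrier := H1set w μ d
  zero_mem' := by simp [H1set]
  add_mem' := by
    rintro α β ⟨a1, a2, a3, a4⟩ ⟨b1, b2, b3, b4⟩
    refine ⟨fun x y => ?_, fun x y hxy => ?_, fun n c hc hX => ?_, fun x => ?_⟩
    · simp only [Pi.add_apply]; rw [a1, b1]; ring
    · simp only [Pi.add_apply]; rw [a2 x y hxy, b2 x y hxy, add_zero]
    · simp only [Pi.add_apply]; rw [sum_add_distrib, a3 n c hc hX, b3 n c hc hX, add_zero]
    · simp only [Pi.add_apply, mul_add]; rw [sum_add_distrib, a4, b4, add_zero]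
  smul_mem' := by
    rintro r α ⟨a1, a2, a3, a4⟩
    refine ⟨fun x y => ?_, fun x y hxy => ?_, fun n c hc hX => ?_, fun x => ?_⟩
    · simp only [Pi.smul_apply, smul_eq_mul]; rw [a1]; ring
    · simp only [Pi.smul_apply, smul_eq_mul]; rw [a2 x y hxy, mul_zero]
    · simp only [Pi.smul_apply, smul_eq_mul]; rw [← mul_sum, a3 n c hc hX, mul_zero]
    · simp only [Pi.smul_apply, smul_eq_mul, mul_left_comm _ r]; rw [← mul_sum, a4, mul_zero]

/-- A harmonic `1`-form vanishing on the edges meeting `W` vanishes. -/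
theorem eq_zero_of_vanish {w : V → V → ℝ} {μ : V → ℝ} {d : V → V → ℝ}
    (hG : IsWeightedGraph w μ) (hconn : GraphConnected w) (hd : IsPathDistance w d)
    {W : Set V} (hW : W.Nonempty)
    (hcurv : ∀ x y, Adj w x y → x ∉ W → y ∉ W → 0 ≤ kappa w μ d x y)
    {α : V → V → ℝ} (hα : α ∈ H1 w μ d)
    (hvan : ∀ x y, Adj w x y → x ∈ W ∨ y ∈ W → α x y = 0) : α = 0 := by
  by_contra hne
  obtain ⟨x₀, hx₀⟩ := Function.ne_iff.1 hne
  obtain ⟨y₀, hxy₀⟩ := Function.ne_iff.1 hx₀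
  have : Nonempty (V × V) := ⟨(x₀, y₀)⟩
  -- the scaling factor is the maximum of `|α| / d`; off the edges `α = 0`
  obtain ⟨⟨a, b⟩, hmax⟩ := Finite.exists_max fun p : V × V => |α p.1 p.2| / d p.1 p.2
  set M := |α a b| / d a b with hM
  have hadj : ∀ x y, α x y ≠ 0 → Adj w x y := fun x y h => by
    by_contra hc
    exact h (hα.2.1 x y hc)
  have hMpos : 0 < M :=
    lt_of_lt_of_le (div_pos (abs_pos.2 hxy₀) (dist_pos' hd ((hadj _ _ hxy₀).ne' hG)))
      (hmax (x₀, y₀))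
  have hab0 : α a b ≠ 0 := by
    intro h0
    rw [hM, h0, abs_zero, zero_div] at hMpos
    exact lt_irrefl _ hMpos
  have hab := hadj a b hab0
  have hβ : M⁻¹ • α ∈ H1 w μ d := (H1 w μ d).smul_mem _ hα
  have hunit : IsUnitForm w μ d (M⁻¹ • α) := by
    refine ⟨hG, hd, hβ, fun x y hxy => ?_⟩
    have hp := dist_pos' hd (hxy.ne' hG)
    have h1 : |α x y| ≤ M * d x y := (div_le_iff₀ hp).1 (hmax (x, y))
    rw [Pi.smul_apply, Pi.smul_apply, smul_eq_mul, inv_mul_le_iff₀ hMpos]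
    exact (le_abs_self _).trans h1
  have hmaxvan : ∀ x y, MaxEdge w d (M⁻¹ • α) x y → x ∉ W ∧ y ∉ W := by
    rintro x y ⟨hxy, he⟩
    by_contra hc
    have := hvan x y hxy (by tauto)
    rw [Pi.smul_apply, Pi.smul_apply, smul_eq_mul, this, mul_zero] at he
    exact (dist_pos' hd (hxy.ne' hG)).ne he
  obtain ⟨x₁, hx₁⟩ := hW
  have hno := hunit.not_maxEdge hconn
    (fun x y hxy => hcurv x y hxy.1 (hmaxvan x y hxy).1 (hmaxvan x y hxy).2)
    (x₀ := x₁) (fun y hy => (hmaxvan x₁ y hy).1 hx₁)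
  have hdab := dist_pos' hd (hab.ne' hG)
  have hval : M⁻¹ * |α a b| = d a b := by
    rw [hM, inv_div]
    field_simp [abs_ne_zero.2 hab0]
  rcases abs_cases (α a b) with ⟨he, -⟩ | ⟨he, -⟩
  · refine hno a b ⟨hab, ?_⟩
    rwa [he] at hval
  · refine hno b a ⟨hab.symm' hG, ?_⟩
    rw [he, ← hα.1 b a, hd.1 a b] at hval
    exact hval

end Form

end Paper

open Paper in
/-- **Theorem (Betti number estimate allowing some negative curvature).**
Let `G = (V, w, μ)` be a finite connected weighted graph with a general path distance `d` and
let `W ⊆ V` be a non-empty set such that `κ(x,y) ≥ 0` whenever `x ∼ y` and `x, y ∈ V ∖ W`.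
Then `β₁(M₂(G)) ≤ |E(W,V)|`, the number of edges with at least one endpoint in `W`. -/
theorem betti_le_card_edges_meeting_W
    {V : Type*} [Fintype V] [Nonempty V] (w : V → V → ℝ) (μ : V → ℝ) (d : V → V → ℝ)
    (hG : IsWeightedGraph w μ) (hconn : GraphConnected w) (hd : IsPathDistance w d)
    (W : Set V) (hW : W.Nonempty)
    (hcurv : ∀ x y, Adj w x y → x ∉ W → y ∉ W → 0 ≤ kappa w μ d x y) :
    betti1 w μ d ≤
      Nat.card { e : Sym2 V // ∃ x y : V, e = s(x, y) ∧ Adj w x y ∧ (x ∈ W ∨ y ∈ W) } := by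
  classical
  set E := { e : Sym2 V // ∃ x y : V, e = s(x, y) ∧ Adj w x y ∧ (x ∈ W ∨ y ∈ W) } with hE
  choose s t hst using fun e : E => e.2
  let Φ : H1 w μ d →ₗ[ℝ] E → ℝ :=
    { toFun := fun α e => α.1 (s e) (t e)
      map_add' := fun _ _ => rfl
      map_smul' := fun _ _ => rfl }
  have hinj : Function.Injective Φ := by
    rw [injective_iff_map_eq_zero]
    rintro ⟨α, hα⟩ h0
    refine Subtype.ext (eq_zero_of_vanish hG hconn hd hW hcurv hα fun x y hxy hxyW => ?_)
    let e : E := ⟨s(x, y), x, y, rfl, hxy, hxyW⟩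
    have he : α (s e) (t e) = 0 := congrFun h0 e
    rcases Sym2.eq_iff.1 (hst e).1 with ⟨h1, h2⟩ | ⟨h1, h2⟩
    · rwa [← h1, ← h2] at he
    · rw [← h1, ← h2] at he
      exact (hα.1 x y).trans (by rw [he, neg_zero])
  have hspan : Submodule.span ℝ (H1set w μ d) = H1 w μ d := Submodule.span_eq (H1 w μ d)
  have hle := LinearMap.finrank_le_finrank_of_injective hinj
  rw [Module.finrank_fintype_fun_eq_card, ← Nat.card_eq_fintype_card] at hle
  rw [betti1, hspan]
  exact hle
end
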